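/- The uncentered Hardy–Littlewood maximal operator M̃ : BV(ℝ) → BV(ℝ) is continuous: if f, f_j ∈ BV(ℝ) with ‖f_j − f‖_{BV} → 0, then ‖M̃f_j − M̃f‖_{BV} → 0, where ‖h‖_{BV} = |h(−∞)| + Var(h). -/

import Mathlib

open MeasureTheory Filter Set Topology

/-- Average of |f| over the interval (a,b). -/
noncomputable def mAvg (f : ℝ → ℝ) (a b : ℝ) : ℝ := (∫ t in a..b, |f t|) / (b - a)

/-- Uncentered Hardy–Littlewood maximal function. -/
noncomputable def uMax (f : ℝ → ℝ) (x : ℝ) : ℝ :=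
  sSup {y | ∃ a b : ℝ, a < b ∧ a ≤ x ∧ x ≤ b ∧ y = mAvg f a b}

/-- f has bounded variation on ℝ. -/
def BVfun (f : ℝ → ℝ) : Prop := BoundedVariationOn f Set.univ

/-- Total variation of f over a set, as a real number. -/
noncomputable def varOn (f : ℝ → ℝ) (s : Set ℝ) : ℝ := (eVariationOn f s).toReal

/-- BV norm: |f(-∞)| + Var(f). -/
noncomputable def bvNorm (f : ℝ → ℝ) : ℝ :=
  |limUnder Filter.atBot f| + varOn f Set.univ

/-- Upper precise representative: limsup over intervals I ∋ x with |I| → 0 of averages of |f|. -/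
noncomputable def ubar (f : ℝ → ℝ) (x : ℝ) : ℝ :=
  ⨅ h : {h : ℝ // 0 < h},
    sSup {y | ∃ a b : ℝ, a < b ∧ a ≤ x ∧ x ≤ b ∧ b - a ≤ h.1 ∧ y = mAvg f a b}

/-- The open "interval" (a,b) in ℝ with extended-real endpoints. -/
noncomputable def erealIoo (a b : EReal) : Set ℝ := {x : ℝ | a < (x : EReal) ∧ (x : EReal) < b}

/-- Value of g at an extended-real point, understood as a limit at ±∞. -/
noncomputable def valAt (g : ℝ → ℝ) (a : EReal) : ℝ :=
  if a = ⊥ then limUnder Filter.atBot g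
  else if a = ⊤ then limUnder Filter.atTop g
  else g a.toReal

open scoped ENNReal

/-! ### Variation estimates -/

theorem eVariationOn_le_of_edist_le {u v w : ℝ → ℝ} {s : Set ℝ}
    (h : ∀ x ∈ s, ∀ y ∈ s, edist (u x) (u y) ≤ edist (v x) (v y) + edist (w x) (w y)) :
    eVariationOn u s ≤ eVariationOn v s + eVariationOn w s := by
  refine iSup_le fun p => ?_
  calc _ ≤ ∑ i ∈ Finset.range p.1, (edist (v (p.2.1 (i+1))) (v (p.2.1 i))
            + edist (w (p.2.1 (i+1))) (w (p.2.1 i))) :=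
        Finset.sum_le_sum fun i _ => h _ (p.2.2.2 _) _ (p.2.2.2 _)
    _ ≤ _ := by
        rw [Finset.sum_add_distrib]
        exact add_le_add (eVariationOn.sum_le p.2.2.1 p.2.2.2)
          (eVariationOn.sum_le p.2.2.1 p.2.2.2)

theorem eVariationOn_le_of_edist_le_edist {u v : ℝ → ℝ} {s : Set ℝ}
    (h : ∀ x ∈ s, ∀ y ∈ s, edist (u x) (u y) ≤ edist (v x) (v y)) :
    eVariationOn u s ≤ eVariationOn v s := by
  refine iSup_le fun p => ?_
  exact (Finset.sum_le_sum fun i _ => h _ (p.2.2.2 _) _ (p.2.2.2 _)).trans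
    (eVariationOn.sum_le p.2.2.1 p.2.2.2)

theorem edist_le_edist_of_abs {a b c d : ℝ} (h : |a - b| ≤ |c - d|) : edist a b ≤ edist c d := by
  rw [edist_dist, edist_dist, Real.dist_eq, Real.dist_eq]
  exact ENNReal.ofReal_le_ofReal h

theorem edist_le_edist_add_of_abs {a b c d e f : ℝ} (h : |a - b| ≤ |c - d| + |e - f|) :
    edist a b ≤ edist c d + edist e f := by
  rw [edist_dist, edist_dist, edist_dist, Real.dist_eq, Real.dist_eq, Real.dist_eq,
    ← ENNReal.ofReal_add (abs_nonneg _) (abs_nonneg _)]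
  exact ENNReal.ofReal_le_ofReal h

theorem eVariationOn_sub_le (u v : ℝ → ℝ) (s : Set ℝ) :
    eVariationOn (u - v) s ≤ eVariationOn u s + eVariationOn v s := by
  refine eVariationOn_le_of_edist_le fun x _ y _ => edist_le_edist_add_of_abs ?_
  have : (u - v) x - (u - v) y = (u x - u y) - (v x - v y) := by simp; ring
  rw [this]; exact abs_sub _ _

theorem eVariationOn_add_le (u v : ℝ → ℝ) (s : Set ℝ) :
    eVariationOn (u + v) s ≤ eVariationOn u s + eVariationOn v s := by
  refine eVariationOn_le_of_edist_le fun x _ y _ => edist_le_edist_add_of_abs ?_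
  have : (u + v) x - (u + v) y = (u x - u y) + (v x - v y) := by simp; ring
  rw [this]; exact abs_add_le _ _

theorem eVariationOn_max_le (u v : ℝ → ℝ) (s : Set ℝ) :
    eVariationOn (fun x => max (u x) (v x)) s ≤ eVariationOn u s + eVariationOn v s := by
  refine eVariationOn_le_of_edist_le fun x _ y _ => edist_le_edist_add_of_abs ?_
  refine (abs_max_sub_max_le_max _ _ _ _).trans ?_
  exact max_le_add_of_nonneg (abs_nonneg _) (abs_nonneg _)

theorem eVariationOn_abs_le (u : ℝ → ℝ) (s : Set ℝ) :
    eVariationOn (fun x => |u x|) s ≤ eVariationOn u s :=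
  eVariationOn_le_of_edist_le_edist fun _ _ _ _ => edist_le_edist_of_abs (abs_abs_sub_abs_le _ _)

theorem eVariationOn_max_const_le (u : ℝ → ℝ) (c : ℝ) (s : Set ℝ) :
    eVariationOn (fun x => max (u x) c) s ≤ eVariationOn u s := by
  refine eVariationOn_le_of_edist_le_edist fun _ _ _ _ => edist_le_edist_of_abs ?_
  exact abs_max_sub_max_le_abs _ _ _

theorem eVariationOn_le_of_majorant {u B : ℝ → ℝ} {p q : ℝ} (hpq : p ≤ q)
    (h : ∀ x y, p ≤ x → x ≤ y → y ≤ q → |u y - u x| ≤ B y - B x) :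
    eVariationOn u (Icc p q) ≤ ENNReal.ofReal (B q - B p) := by
  have hB : MonotoneOn B (Icc p q) := fun x hx y hy hxy =>
    sub_nonneg.1 ((abs_nonneg _).trans (h x y hx.1 hxy hy.2))
  calc eVariationOn u (Icc p q) ≤ eVariationOn B (Icc p q) := by
        refine eVariationOn_le_of_edist_le_edist fun x hx y hy => ?_
        rcases le_total x y with hxy | hxy
        · rw [edist_comm (u x), edist_comm (B x)]
          exact edist_le_edist_of_abs ((h x y hx.1 hxy hy.2).trans (le_abs_self _))
        · exact edist_le_edist_of_abs ((h y x hy.1 hxy hx.2).trans (le_abs_self _))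
    _ ≤ _ := by
        have := (hB.eVariationOn_eq (left_mem_Icc.2 hpq) (right_mem_Icc.2 hpq)).le
        rwa [inter_self] at this

theorem exists_variation_function {h : ℝ → ℝ} {p q : ℝ} (hpq : p ≤ q)
    (hfin : eVariationOn h (Icc p q) ≠ ⊤) :
    ∃ W : ℝ → ℝ, (∀ x y, p ≤ x → x ≤ y → y ≤ q → |h y - h x| ≤ W y - W x) ∧
      W p = 0 ∧ W q = (eVariationOn h (Icc p q)).toReal := by
  have hl : LocallyBoundedVariationOn h (Icc p q) :=
    BoundedVariationOn.locallyBoundedVariationOn hfin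
  refine ⟨variationOnFromTo h (Icc p q) p, fun x y hx hxy hy => ?_, ?_, ?_⟩
  · exact variationOnFromTo.abs_sub_le_sub_of_le hl (left_mem_Icc.2 hpq) ⟨hx, hxy.trans hy⟩
      ⟨hx.trans hxy, hy⟩ hxy
  · exact variationOnFromTo.self _ _ _
  · rw [variationOnFromTo.eq_of_le _ _ hpq, inter_self]

theorem eVariationOn_le_of_right_dominated {G h : ℝ → ℝ} {p q : ℝ} (hpq : p ≤ q)
    (hle : ∀ x ∈ Icc p q, h x ≤ G x)
    (hR : ∀ x y, p ≤ x → x < y → y ≤ q → G y < G x → ∀ δ > 0, ∃ t ∈ Icc x y, G x - δ ≤ h t) :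
    eVariationOn G (Icc p q) ≤ eVariationOn h (Icc p q) + ENNReal.ofReal (G q - h q) := by
  by_cases hfin : eVariationOn h (Icc p q) = ⊤
  · simp [hfin]
  obtain ⟨W, hW, hWp, hWq⟩ := exists_variation_function hpq hfin
  have key := eVariationOn_le_of_majorant (u := G) (B := fun x => W x + (G x - h x)) hpq ?_
  · refine key.trans ?_
    rw [← ENNReal.ofReal_toReal hfin, ← hWq, ← ENNReal.ofReal_add]
    · apply ENNReal.ofReal_le_ofReal
      have := hle p (left_mem_Icc.2 hpq)
      linarith
    · rw [hWq]; exact ENNReal.toReal_nonneg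
    · exact sub_nonneg.2 (hle q (right_mem_Icc.2 hpq))
  · intro x y hx hxy hy
    have h1 := abs_le.1 (hW x y hx hxy hy)
    have h2 := hle y ⟨hx.trans hxy, hy⟩
    rcases le_or_gt (G x) (G y) with hG | hG
    · rw [abs_of_nonneg (by linarith)]; linarith
    · rw [abs_of_neg (by linarith)]
      have hxy' : x < y := lt_of_le_of_ne hxy (by rintro rfl; exact lt_irrefl _ hG)
      refine le_of_forall_pos_le_add fun δ hδ => ?_
      obtain ⟨t, ht, hht⟩ := hR x y hx hxy' hy hG (δ/2) (by linarith)
      have h3 := abs_le.1 (hW x t hx ht.1 (ht.2.trans hy))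
      have h4 := abs_le.1 (hW t y (hx.trans ht.1) ht.2 hy)
      linarith

theorem eVariationOn_le_of_left_dominated {G h : ℝ → ℝ} {p q : ℝ} (hpq : p ≤ q)
    (hle : ∀ x ∈ Icc p q, h x ≤ G x)
    (hL : ∀ x y, p ≤ x → x < y → y ≤ q → G x < G y → ∀ δ > 0, ∃ t ∈ Icc x y, G y - δ ≤ h t) :
    eVariationOn G (Icc p q) ≤ eVariationOn h (Icc p q) + ENNReal.ofReal (G p - h p) := by
  by_cases hfin : eVariationOn h (Icc p q) = ⊤
  · simp [hfin]
  obtain ⟨W, hW, hWp, hWq⟩ := exists_variation_function hpq hfin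
  have key := eVariationOn_le_of_majorant (u := G) (B := fun x => W x - (G x - h x)) hpq ?_
  · refine key.trans ?_
    rw [← ENNReal.ofReal_toReal hfin, ← hWq, ← ENNReal.ofReal_add]
    · apply ENNReal.ofReal_le_ofReal
      have := hle q (right_mem_Icc.2 hpq)
      linarith
    · rw [hWq]; exact ENNReal.toReal_nonneg
    · exact sub_nonneg.2 (hle p (left_mem_Icc.2 hpq))
  · intro x y hx hxy hy
    have h1 := abs_le.1 (hW x y hx hxy hy)
    have h2 := hle x ⟨hx, hxy.trans hy⟩
    rcases le_or_gt (G y) (G x) with hG | hG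
    · rw [abs_of_nonpos (by linarith)]; linarith
    · rw [abs_of_pos (by linarith)]
      have hxy' : x < y := lt_of_le_of_ne hxy (by rintro rfl; exact lt_irrefl _ hG)
      refine le_of_forall_pos_le_add fun δ hδ => ?_
      obtain ⟨t, ht, hht⟩ := hL x y hx hxy' hy hG (δ/2) (by linarith)
      have h3 := abs_le.1 (hW x t hx ht.1 (ht.2.trans hy))
      have h4 := abs_le.1 (hW t y (hx.trans ht.1) ht.2 hy)
      linarith

theorem sum_eVariationOn_le {u : ℝ → ℝ} {t : ℕ → ℝ} (ht : Monotone t) (S : Finset ℕ) :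
    ∀ N : Set ℝ, (∀ k ∈ S, Icc (t k) (t (k+1)) ⊆ N) →
      ∑ k ∈ S, eVariationOn u (Icc (t k) (t (k+1))) ≤ eVariationOn u N := by
  induction S using Finset.induction_on_max with
  | empty => intro N _; simp
  | insert k S hk ih =>
    intro N hN
    have hkS : k ∉ S := fun h => lt_irrefl _ (hk k h)
    rw [Finset.sum_insert hkS, add_comm]
    have h1 := ih (N ∩ Iic (t k)) fun i hi =>
      subset_inter (hN i (Finset.mem_insert_of_mem hi)) fun x hx => hx.2.trans (ht (hk i hi))
    have h2 : eVariationOn u (Icc (t k) (t (k+1))) ≤ eVariationOn u (N ∩ Ici (t k)) :=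
      eVariationOn.mono _ (subset_inter (hN k (Finset.mem_insert_self _ _)) fun x hx => hx.1)
    refine (add_le_add h1 h2).trans ((eVariationOn.add_le_union u ?_).trans
      (eVariationOn.mono _ ?_))
    · intro x hx y hy; exact le_trans hx.2 hy.2
    · exact union_subset inter_subset_left inter_subset_left

/-! ### Averages and the maximal function of a function of bounded variation -/

theorem BVfun.locally {f : ℝ → ℝ} (hf : BVfun f) : LocallyBoundedVariationOn f univ :=
  BoundedVariationOn.locallyBoundedVariationOn hf

theorem BVfun.intervalIntegrable_abs {f : ℝ → ℝ} (hf : BVfun f) (a b : ℝ) :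
    IntervalIntegrable (fun t => |f t|) volume a b := by
  obtain ⟨p, q, hp, hq, rfl⟩ := hf.locally.exists_monotoneOn_sub_monotoneOn
  exact ((hp.mono (subset_univ _)).intervalIntegrable.sub
    (hq.mono (subset_univ _)).intervalIntegrable).abs

theorem BVfun.exists_bound {f : ℝ → ℝ} (hf : BVfun f) : ∃ M, 0 ≤ M ∧ ∀ x, |f x| ≤ M := by
  refine ⟨(eVariationOn f univ).toReal + |f 0|, by positivity, fun x => ?_⟩
  have h1 := hf.dist_le (mem_univ x) (mem_univ 0)
  rw [Real.dist_eq] at h1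
  have := abs_sub_abs_le_abs_sub (f x) (f 0)
  linarith

theorem integral_abs_nonneg {f : ℝ → ℝ} {a b : ℝ} (hab : a ≤ b) : 0 ≤ ∫ t in a..b, |f t| :=
  intervalIntegral.integral_nonneg hab fun _ _ => abs_nonneg _

theorem BVfun.integral_le {f : ℝ → ℝ} (hf : BVfun f) {a b K : ℝ} (hab : a ≤ b)
    (h : ∀ t ∈ Ioo a b, |f t| ≤ K) : ∫ t in a..b, |f t| ≤ K * (b - a) := by
  have := intervalIntegral.integral_mono_on_of_le_Ioo hab (hf.intervalIntegrable_abs a b)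
    (intervalIntegrable_const (c := K)) h
  simpa [mul_comm] using this

theorem BVfun.le_integral {f : ℝ → ℝ} (hf : BVfun f) {a b K : ℝ} (hab : a ≤ b)
    (h : ∀ t ∈ Ioo a b, K ≤ |f t|) : K * (b - a) ≤ ∫ t in a..b, |f t| := by
  have := intervalIntegral.integral_mono_on_of_le_Ioo hab
    (intervalIntegrable_const (c := K)) (hf.intervalIntegrable_abs a b) h
  simpa [mul_comm] using this

theorem BVfun.integral_add {f : ℝ → ℝ} (hf : BVfun f) (a b c : ℝ) :
    (∫ t in a..b, |f t|) + ∫ t in b..c, |f t| = ∫ t in a..c, |f t| :=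
  intervalIntegral.integral_add_adjacent_intervals (hf.intervalIntegrable_abs _ _)
    (hf.intervalIntegrable_abs _ _)

theorem mAvg_le_iff {f : ℝ → ℝ} {a b c : ℝ} (hab : a < b) :
    mAvg f a b ≤ c ↔ ∫ t in a..b, |f t| ≤ c * (b - a) :=
  div_le_iff₀ (sub_pos.2 hab)

theorem lt_mAvg_iff {f : ℝ → ℝ} {a b c : ℝ} (hab : a < b) :
    c < mAvg f a b ↔ c * (b - a) < ∫ t in a..b, |f t| :=
  lt_div_iff₀ (sub_pos.2 hab)

theorem le_mAvg_iff {f : ℝ → ℝ} {a b c : ℝ} (hab : a < b) :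
    c ≤ mAvg f a b ↔ c * (b - a) ≤ ∫ t in a..b, |f t| :=
  le_div_iff₀ (sub_pos.2 hab)

theorem BVfun.mAvg_le {f : ℝ → ℝ} (hf : BVfun f) {a b K : ℝ} (hab : a < b)
    (h : ∀ t ∈ Ioo a b, |f t| ≤ K) : mAvg f a b ≤ K :=
  (mAvg_le_iff hab).2 (hf.integral_le hab.le h)

theorem BVfun.bddAbove {f : ℝ → ℝ} (hf : BVfun f) (x : ℝ) :
    BddAbove {y | ∃ a b : ℝ, a < b ∧ a ≤ x ∧ x ≤ b ∧ y = mAvg f a b} := by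
  obtain ⟨M, -, hM⟩ := hf.exists_bound
  refine ⟨M, ?_⟩
  rintro y ⟨a, b, hab, -, -, rfl⟩
  exact hf.mAvg_le hab fun t _ => hM t

theorem BVfun.mAvg_le_uMax {f : ℝ → ℝ} (hf : BVfun f) {a b x : ℝ} (hab : a < b) (hax : a ≤ x)
    (hxb : x ≤ b) : mAvg f a b ≤ uMax f x :=
  le_csSup (hf.bddAbove x) ⟨a, b, hab, hax, hxb, rfl⟩

theorem BVfun.integral_le_uMax {f : ℝ → ℝ} (hf : BVfun f) {a b x : ℝ} (hab : a ≤ b) (hax : a ≤ x)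
    (hxb : x ≤ b) : ∫ t in a..b, |f t| ≤ uMax f x * (b - a) := by
  rcases hab.eq_or_lt with rfl | hab
  · simp
  · exact (mAvg_le_iff hab).1 (hf.mAvg_le_uMax hab hax hxb)

theorem uMax_set_nonempty (f : ℝ → ℝ) (x : ℝ) :
    {y | ∃ a b : ℝ, a < b ∧ a ≤ x ∧ x ≤ b ∧ y = mAvg f a b}.Nonempty :=
  ⟨_, x, x + 1, by linarith, le_rfl, by linarith, rfl⟩

theorem uMax_le {f : ℝ → ℝ} {x K : ℝ}
    (h : ∀ a b, a < b → a ≤ x → x ≤ b → mAvg f a b ≤ K) : uMax f x ≤ K := by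
  refine csSup_le (uMax_set_nonempty f x) ?_
  rintro y ⟨a, b, hab, hax, hxb, rfl⟩
  exact h a b hab hax hxb

theorem exists_lt_mAvg_of_lt_uMax {f : ℝ → ℝ} {x K : ℝ} (h : K < uMax f x) :
    ∃ a b, a < b ∧ a ≤ x ∧ x ≤ b ∧ K < mAvg f a b := by
  obtain ⟨y, ⟨a, b, hab, hax, hxb, rfl⟩, hy⟩ := exists_lt_of_lt_csSup (uMax_set_nonempty f x) h
  exact ⟨a, b, hab, hax, hxb, hy⟩

theorem BVfun.exists_lt_mAvg_oneSided {f : ℝ → ℝ} (hf : BVfun f) {x K : ℝ} (h : K < uMax f x) :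
    (∃ b, x < b ∧ K < mAvg f x b) ∨ ∃ a, a < x ∧ K < mAvg f a x := by
  obtain ⟨a, b, hab, hax, hxb, hK⟩ := exists_lt_mAvg_of_lt_uMax h
  rcases hax.eq_or_lt with rfl | hax
  · exact Or.inl ⟨b, hab, hK⟩
  rcases hxb.eq_or_lt with rfl | hxb
  · exact Or.inr ⟨a, hab, hK⟩
  by_contra! hcon
  have h1 := (mAvg_le_iff hxb).1 (hcon.1 b hxb)
  have h2 := (mAvg_le_iff hax).1 (hcon.2 a hax)
  have h3 := (lt_mAvg_iff hab).1 hK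
  have h4 := hf.integral_add a x b
  nlinarith

theorem BVfun.uMax_le_oneSided {f : ℝ → ℝ} (hf : BVfun f) {x K : ℝ}
    (hr : ∀ b, x < b → mAvg f x b ≤ K) (hl : ∀ a, a < x → mAvg f a x ≤ K) : uMax f x ≤ K := by
  by_contra! hcon
  rcases hf.exists_lt_mAvg_oneSided hcon with ⟨b, hb, h⟩ | ⟨a, ha, h⟩
  · exact absurd (hr b hb) (not_le.2 h)
  · exact absurd (hl a ha) (not_le.2 h)

theorem mAvg_nonneg {f : ℝ → ℝ} {a b : ℝ} (hab : a ≤ b) : 0 ≤ mAvg f a b :=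
  div_nonneg (integral_abs_nonneg hab) (sub_nonneg.2 hab)

theorem BVfun.uMax_nonneg {f : ℝ → ℝ} (hf : BVfun f) (x : ℝ) : 0 ≤ uMax f x :=
  (mAvg_nonneg (by linarith : x ≤ x + 1)).trans
    (hf.mAvg_le_uMax (by linarith : x < x + 1) le_rfl (by linarith))

theorem uMax_le_add {f g : ℝ → ℝ} (hf : BVfun f) (hg : BVfun g) {ε : ℝ}
    (h : ∀ x, |f x - g x| ≤ ε) (x : ℝ) : uMax f x ≤ uMax g x + ε := by
  refine uMax_le fun a b hab hax hxb => ?_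
  rw [mAvg_le_iff hab, add_mul]
  have h1 := intervalIntegral.integral_mono_on hab.le (hf.intervalIntegrable_abs a b)
    ((hg.intervalIntegrable_abs a b).add (intervalIntegrable_const (c := ε))) (fun t _ => by
      have h2 := abs_sub_abs_le_abs_sub (f t) (g t)
      have h3 := h t
      show |f t| ≤ |g t| + ε
      linarith)
  have h2 : ∫ t in a..b, (|g t| + ε) = (∫ t in a..b, |g t|) + ε * (b - a) := by
    rw [intervalIntegral.integral_add (hg.intervalIntegrable_abs a b)
      (intervalIntegrable_const (c := ε))]
    simp [mul_comm]
  have h3 := hg.integral_le_uMax hab.le hax hxb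
  refine h1.trans ?_
  show ∫ t in a..b, (|g t| + ε) ≤ _
  rw [h2]; linarith

theorem abs_uMax_sub_le {f g : ℝ → ℝ} (hf : BVfun f) (hg : BVfun g) {ε : ℝ}
    (h : ∀ x, |f x - g x| ≤ ε) (x : ℝ) : |uMax f x - uMax g x| ≤ ε := by
  have h1 := uMax_le_add hf hg h x
  have h2 := uMax_le_add hg hf (fun x => by rw [abs_sub_comm]; exact h x) x
  rw [abs_le]; constructor <;> linarith

theorem uMax_congr_ae {f g : ℝ → ℝ} (h : f =ᵐ[volume] g) : uMax f = uMax g := by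
  have : ∀ a b, mAvg f a b = mAvg g a b := fun a b => by
    unfold mAvg
    rw [intervalIntegral.integral_congr_ae]
    filter_upwards [h] with t ht _
    rw [ht]
  funext x
  simp only [uMax, this]

/-- One-sided maximal function to the right, truncated below by `h`. -/
noncomputable def rightMax (f h : ℝ → ℝ) (x : ℝ) : ℝ :=
  sSup {y | y = h x ∨ ∃ b, x < b ∧ y = mAvg f x b}

/-- One-sided maximal function to the left, truncated below by `h`. -/
noncomputable def leftMax (f h : ℝ → ℝ) (x : ℝ) : ℝ :=
  sSup {y | y = h x ∨ ∃ a, a < x ∧ y = mAvg f a x}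

theorem BVfun.rightMax_bdd {f : ℝ → ℝ} (hf : BVfun f) (h : ℝ → ℝ) (x : ℝ) :
    BddAbove {y | y = h x ∨ ∃ b, x < b ∧ y = mAvg f x b} := by
  refine ⟨max (h x) (uMax f x), ?_⟩
  rintro y (rfl | ⟨b, hb, rfl⟩)
  · exact le_max_left _ _
  · exact le_max_of_le_right (hf.mAvg_le_uMax hb le_rfl hb.le)

theorem BVfun.leftMax_bdd {f : ℝ → ℝ} (hf : BVfun f) (h : ℝ → ℝ) (x : ℝ) :
    BddAbove {y | y = h x ∨ ∃ a, a < x ∧ y = mAvg f a x} := by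
  refine ⟨max (h x) (uMax f x), ?_⟩
  rintro y (rfl | ⟨b, hb, rfl⟩)
  · exact le_max_left _ _
  · exact le_max_of_le_right (hf.mAvg_le_uMax hb hb.le le_rfl)

theorem BVfun.eVariationOn_rightMax_le {f h : ℝ → ℝ} (hf : BVfun f) {p q : ℝ} (hpq : p ≤ q)
    (hfh : ∀ x ∈ Icc p q, |f x| ≤ h x) :
    eVariationOn (rightMax f h) (Icc p q) ≤
      eVariationOn h (Icc p q) + ENNReal.ofReal (rightMax f h q - h q) := by
  refine eVariationOn_le_of_right_dominated hpq
    (fun x _ => le_csSup (hf.rightMax_bdd h x) (Or.inl rfl)) ?_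
  intro x y hx hxy hy hG δ hδ
  by_contra! hcon
  set c := max (rightMax f h x - δ) (rightMax f h y) with hc
  have hfc : ∀ t ∈ Icc x y, |f t| ≤ c := fun t ht =>
    ((hfh t ⟨hx.trans ht.1, ht.2.trans hy⟩).trans (hcon t ht).le).trans (le_max_left _ _)
  have hlt : c < rightMax f h x := max_lt (by linarith) hG
  obtain ⟨z, hz, hcz⟩ := exists_lt_of_lt_csSup ⟨h x, Or.inl rfl⟩ hlt
  rcases hz with rfl | ⟨b, hb, rfl⟩
  · exact absurd ((hcon x (left_mem_Icc.2 hxy.le)).le.trans (le_max_left _ _)) (not_le.2 hcz)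
  · rcases le_or_gt b y with hby | hby
    · exact absurd (hf.mAvg_le hb fun t ht => hfc t ⟨ht.1.le, ht.2.le.trans hby⟩) (not_le.2 hcz)
    · have h1 := hf.integral_le hxy.le fun t ht => hfc t (Ioo_subset_Icc_self ht)
      have h2 : mAvg f y b ≤ c :=
        (le_csSup (hf.rightMax_bdd h y) (Or.inr ⟨b, hby, rfl⟩)).trans (le_max_right _ _)
      rw [mAvg_le_iff hby] at h2
      rw [lt_mAvg_iff hb] at hcz
      have h3 := hf.integral_add x y b
      nlinarith

theorem BVfun.eVariationOn_leftMax_le {f h : ℝ → ℝ} (hf : BVfun f) {p q : ℝ} (hpq : p ≤ q)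
    (hfh : ∀ x ∈ Icc p q, |f x| ≤ h x) :
    eVariationOn (leftMax f h) (Icc p q) ≤
      eVariationOn h (Icc p q) + ENNReal.ofReal (leftMax f h p - h p) := by
  refine eVariationOn_le_of_left_dominated hpq
    (fun x _ => le_csSup (hf.leftMax_bdd h x) (Or.inl rfl)) ?_
  intro x y hx hxy hy hG δ hδ
  by_contra! hcon
  set c := max (leftMax f h y - δ) (leftMax f h x) with hc
  have hfc : ∀ t ∈ Icc x y, |f t| ≤ c := fun t ht =>
    ((hfh t ⟨hx.trans ht.1, ht.2.trans hy⟩).trans (hcon t ht).le).trans (le_max_left _ _)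
  have hlt : c < leftMax f h y := max_lt (by linarith) hG
  obtain ⟨z, hz, hcz⟩ := exists_lt_of_lt_csSup ⟨h y, Or.inl rfl⟩ hlt
  rcases hz with rfl | ⟨a, ha, rfl⟩
  · exact absurd ((hcon y (right_mem_Icc.2 hxy.le)).le.trans (le_max_left _ _)) (not_le.2 hcz)
  · rcases le_or_gt x a with hxa | hxa
    · exact absurd (hf.mAvg_le ha fun t ht => hfc t ⟨hxa.trans ht.1.le, ht.2.le⟩) (not_le.2 hcz)
    · have h1 := hf.integral_le hxy.le fun t ht => hfc t (Ioo_subset_Icc_self ht)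
      have h2 : mAvg f a x ≤ c :=
        (le_csSup (hf.leftMax_bdd h x) (Or.inr ⟨a, hxa, rfl⟩)).trans (le_max_right _ _)
      rw [mAvg_le_iff hxa] at h2
      rw [lt_mAvg_iff ha] at hcz
      have h3 := hf.integral_add a x y
      nlinarith

/-- The variation of the maximal function is controlled by any function squeezed between `|f|` and
`uMax f`, up to boundary terms. -/
theorem BVfun.eVariationOn_uMax_le {f h : ℝ → ℝ} (hf : BVfun f) {p q : ℝ} (hpq : p ≤ q)
    (hfh : ∀ x ∈ Icc p q, |f x| ≤ h x) (hhg : ∀ x ∈ Icc p q, h x ≤ uMax f x) :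
    eVariationOn (uMax f) (Icc p q) ≤ 2 * eVariationOn h (Icc p q) +
      ENNReal.ofReal (uMax f p - h p) + ENNReal.ofReal (uMax f q - h q) := by
  have hr : ∀ x ∈ Icc p q, rightMax f h x ≤ uMax f x := fun x hx => by
    refine csSup_le ⟨h x, Or.inl rfl⟩ ?_
    rintro y (rfl | ⟨b, hb, rfl⟩)
    · exact hhg x hx
    · exact hf.mAvg_le_uMax hb le_rfl hb.le
  have hl : ∀ x ∈ Icc p q, leftMax f h x ≤ uMax f x := fun x hx => by
    refine csSup_le ⟨h x, Or.inl rfl⟩ ?_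
    rintro y (rfl | ⟨b, hb, rfl⟩)
    · exact hhg x hx
    · exact hf.mAvg_le_uMax hb hb.le le_rfl
  have heq : EqOn (uMax f) (fun x => max (rightMax f h x) (leftMax f h x)) (Icc p q) := by
    intro x hx
    refine le_antisymm (hf.uMax_le_oneSided ?_ ?_) (max_le (hr x hx) (hl x hx))
    · exact fun b hb => le_max_of_le_left (le_csSup (hf.rightMax_bdd h x) (Or.inr ⟨b, hb, rfl⟩))
    · exact fun b hb => le_max_of_le_right (le_csSup (hf.leftMax_bdd h x) (Or.inr ⟨b, hb, rfl⟩))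
  rw [eVariationOn.congr heq]
  have h1 := hf.eVariationOn_rightMax_le hpq hfh
  have h2 := hf.eVariationOn_leftMax_le hpq hfh
  have h3 : ENNReal.ofReal (rightMax f h q - h q) ≤ ENNReal.ofReal (uMax f q - h q) :=
    ENNReal.ofReal_le_ofReal (sub_le_sub_right (hr q (right_mem_Icc.2 hpq)) _)
  have h4 : ENNReal.ofReal (leftMax f h p - h p) ≤ ENNReal.ofReal (uMax f p - h p) :=
    ENNReal.ofReal_le_ofReal (sub_le_sub_right (hl p (left_mem_Icc.2 hpq)) _)
  calc _ ≤ _ := eVariationOn_max_le _ _ _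
    _ ≤ (eVariationOn h (Icc p q) + ENNReal.ofReal (uMax f q - h q)) +
        (eVariationOn h (Icc p q) + ENNReal.ofReal (uMax f p - h p)) :=
      add_le_add (h1.trans (add_le_add_right h3 _)) (h2.trans (add_le_add_right h4 _))
    _ = _ := by ring

theorem abs_sub_le_of_eVariationOn_le {u : ℝ → ℝ} {s : Set ℝ} {ε : ℝ} (hε : 0 ≤ ε)
    (h : eVariationOn u s ≤ ENNReal.ofReal ε) {x y : ℝ} (hx : x ∈ s) (hy : y ∈ s) :
    |u x - u y| ≤ ε := by
  have h1 := (eVariationOn.edist_le u hx hy).trans h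
  rw [edist_dist, Real.dist_eq] at h1
  exact (ENNReal.ofReal_le_ofReal_iff hε).1 h1

theorem BVfun.exists_small_variation {f : ℝ → ℝ} (hf : BVfun f) (x : ℝ) {ε : ℝ} (hε : 0 < ε) :
    ∃ η > 0, eVariationOn f (Ico (x - η) x) ≤ ENNReal.ofReal ε ∧
      eVariationOn f (Ioc x (x + η)) ≤ ENNReal.ofReal ε := by
  have h1 := BoundedVariationOn.tendsto_eVariationOn_Ico_zero hf x
  have h2 := BoundedVariationOn.tendsto_eVariationOn_Ioc_zero hf x
  simp only [univ_inter, nhdsWithin_univ] at h1 h2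
  have hε' : (0 : ℝ≥0∞) < ENNReal.ofReal ε := ENNReal.ofReal_pos.2 hε
  have h3 := ((h1.eventually_lt_const hε').and (h2.eventually_lt_const hε'))
  obtain ⟨η, hη, h4⟩ := Metric.eventually_nhds_iff.1 h3
  refine ⟨η / 2, by positivity, ?_, ?_⟩
  · exact (h4 (y := x - η / 2) (by rw [Real.dist_eq, abs_lt]; constructor <;> linarith)).1.le
  · exact (h4 (y := x + η / 2) (by rw [Real.dist_eq, abs_lt]; constructor <;> linarith)).2.le

theorem BVfun.exists_abs_le_uMax_add {f : ℝ → ℝ} (hf : BVfun f) (hdom : ∀ x, |f x| ≤ uMax f x)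
    (x : ℝ) {ε : ℝ} (hε : 0 < ε) :
    ∃ η > 0, ∀ t, |t - x| ≤ η → |f t| ≤ uMax f x + ε := by
  obtain ⟨η, hη, hl, hr⟩ := hf.exists_small_variation x hε
  refine ⟨η, hη, fun t ht => ?_⟩
  have ht' := abs_le.1 ht
  rcases lt_trichotomy t x with htx | rfl | htx
  · have h1 : (|f t| - ε) * (x - (x - η)) ≤ ∫ t in (x - η)..x, |f t| := by
      refine hf.le_integral (by linarith) fun s hs => ?_
      have := abs_sub_le_of_eVariationOn_le hε.le hl (x := t) (y := s) ⟨by linarith, htx⟩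
        ⟨hs.1.le, hs.2⟩
      have := abs_sub_abs_le_abs_sub (f t) (f s)
      linarith
    have h2 := hf.integral_le_uMax (by linarith : x - η ≤ x) (by linarith) le_rfl
    have h3 := le_of_mul_le_mul_right (h1.trans h2) (by linarith)
    linarith
  · linarith [hdom t]
  · have h1 : (|f t| - ε) * ((x + η) - x) ≤ ∫ t in x..(x + η), |f t| := by
      refine hf.le_integral (by linarith) fun s hs => ?_
      have := abs_sub_le_of_eVariationOn_le hε.le hr (x := t) (y := s) ⟨htx, by linarith⟩
        ⟨hs.1, hs.2.le⟩
      have := abs_sub_abs_le_abs_sub (f t) (f s)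
      linarith
    have h2 := hf.integral_le_uMax (by linarith : x ≤ x + η) le_rfl (by linarith)
    have h3 := le_of_mul_le_mul_right (h1.trans h2) (by linarith)
    linarith

theorem BVfun.uMax_le_of_bound {f : ℝ → ℝ} (hf : BVfun f) {M : ℝ} (hM : ∀ x, |f x| ≤ M) (x : ℝ) :
    uMax f x ≤ M := uMax_le fun _ _ hab _ _ => hf.mAvg_le hab fun t _ => hM t

theorem integral_abs_mono {f : ℝ → ℝ} (hf : BVfun f) {a b c d : ℝ} (hca : c ≤ a) (_ : a ≤ b)
    (hbd : b ≤ d) : ∫ t in a..b, |f t| ≤ ∫ t in c..d, |f t| := by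
  have h1 := hf.integral_add c a b
  have h2 := hf.integral_add c b d
  have h3 := integral_abs_nonneg (f := f) hca
  have h4 := integral_abs_nonneg (f := f) hbd
  linarith

theorem BVfun.integral_le_uMax_mul {f : ℝ → ℝ} (hf : BVfun f) {a b : ℝ} (hab : a ≤ b) (x y : ℝ)
    (hax : a ≤ x) (hxb : x ≤ b) : ∫ t in a..b, |f t| ≤ uMax f y * (b - a + |y - x|) := by
  have h1 := integral_abs_mono hf (min_le_left a y) hab (le_max_left b y)
  have h2 := hf.integral_le_uMax (by
    exact (min_le_left a y).trans (hab.trans (le_max_left b y)))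
    (min_le_right a y) (le_max_right b y)
  have h3 : max b y - min a y ≤ b - a + |y - x| := by
    rcases le_total y x with h | h
    · rw [abs_of_nonpos (by linarith), max_eq_left (by linarith)]
      rcases min_cases a y with ⟨h, _⟩ | ⟨h, _⟩ <;> rw [h] <;> linarith
    · rw [abs_of_nonneg (by linarith), min_eq_left (by linarith)]
      rcases max_cases b y with ⟨h, _⟩ | ⟨h, _⟩ <;> rw [h] <;> linarith
  exact h1.trans (h2.trans (mul_le_mul_of_nonneg_left h3 (hf.uMax_nonneg y)))

theorem BVfun.continuous_uMax {f : ℝ → ℝ} (hf : BVfun f) (hdom : ∀ x, |f x| ≤ uMax f x) :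
    Continuous (uMax f) := by
  obtain ⟨M, hM0, hM⟩ := hf.exists_bound
  have hgM := hf.uMax_le_of_bound hM
  rw [Metric.continuous_iff]
  intro x ε hε
  obtain ⟨a, b, hab, hax, hxb, hA⟩ := exists_lt_mAvg_of_lt_uMax (f := f) (x := x)
    (K := uMax f x - ε / 2) (by linarith)
  rw [lt_mAvg_iff hab] at hA
  obtain ⟨η, hη, hup⟩ := hf.exists_abs_le_uMax_add hdom x (ε := ε / 2) (by linarith)
  have hpos1 : 0 < ε * (b - a) / (2 * (M + 1)) := by
    have := sub_pos.2 hab; positivity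
  have hpos2 : 0 < ε * η / (4 * (M + 1)) := by positivity
  refine ⟨min (min (η / 2) (ε * (b - a) / (2 * (M + 1)))) (ε * η / (4 * (M + 1))),
    by positivity, fun y hy => ?_⟩
  rw [Real.dist_eq, lt_min_iff, lt_min_iff, lt_div_iff₀ (by positivity),
    lt_div_iff₀ (by positivity), lt_div_iff₀ (by positivity)] at hy
  obtain ⟨⟨hy1, hy2⟩, hy3⟩ := hy
  have hyn := abs_nonneg (y - x)
  have hlow : uMax f x - ε < uMax f y := by
    by_contra! hcon
    have h1 := hf.integral_le_uMax_mul hab.le x y hax hxb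
    have h2 := hgM y
    have h3 : uMax f y * |y - x| ≤ M * |y - x| := mul_le_mul_of_nonneg_right h2 hyn
    have h4 : uMax f y * (b - a) ≤ (uMax f x - ε) * (b - a) :=
      mul_le_mul_of_nonneg_right hcon (sub_pos.2 hab).le
    nlinarith
  have hupp : uMax f y ≤ uMax f x + ε / 2 := by
    refine uMax_le fun c d hcd hcy hyd => ?_
    have hy' := abs_lt.1 (show |y - x| < η / 2 by linarith)
    by_cases hin : x - η ≤ c ∧ d ≤ x + η
    · refine hf.mAvg_le hcd fun t ht => hup t (abs_le.2 ⟨?_, ?_⟩)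
      · linarith [ht.1, hin.1]
      · linarith [ht.2, hin.2]
    · have hlen : η / 2 ≤ d - c := by
        rcases not_and_or.1 hin with h | h
        · linarith [not_le.1 h]
        · linarith [not_le.1 h]
      rw [mAvg_le_iff hcd]
      have h1 := hf.integral_le_uMax_mul hcd.le y x hcy hyd
      rw [abs_sub_comm] at h1
      have h3 : uMax f x * |y - x| ≤ M * |y - x| := mul_le_mul_of_nonneg_right (hgM x) hyn
      nlinarith
  rw [Real.dist_eq, abs_lt]
  constructor <;> linarith

theorem BVfun.abs_bv {f : ℝ → ℝ} (hf : BVfun f) : BVfun fun x => |f x| :=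
  ne_top_of_le_ne_top hf (eVariationOn_abs_le f univ)

theorem eVariationOn_univ_le {u : ℝ → ℝ} {C : ℝ≥0∞}
    (h : ∀ p q, p ≤ q → eVariationOn u (Icc p q) ≤ C) : eVariationOn u univ ≤ C := by
  rw [eVariationOn.eq_biSup_inter_Icc]
  refine iSup₂_le fun p hp => ?_
  rw [univ_inter]
  exact h _ _ hp.2.2

theorem BVfun.uMax_bv {f : ℝ → ℝ} (hf : BVfun f) (hdom : ∀ x, |f x| ≤ uMax f x) :
    BVfun (uMax f) := by
  obtain ⟨M, hM0, hM⟩ := hf.exists_bound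
  have hgM := hf.uMax_le_of_bound hM
  have : eVariationOn (uMax f) univ ≤
      2 * eVariationOn f univ + ENNReal.ofReal M + ENNReal.ofReal M := by
    refine eVariationOn_univ_le fun p q hpq => ?_
    refine (hf.eVariationOn_uMax_le (h := fun x => |f x|) hpq (fun _ _ => le_rfl)
      (fun x _ => hdom x)).trans ?_
    refine add_le_add (add_le_add (mul_le_mul_right ?_ _) ?_) ?_
    · exact (eVariationOn_abs_le f _).trans (eVariationOn.mono _ (subset_univ _))
    · exact ENNReal.ofReal_le_ofReal (by linarith [hgM p, abs_nonneg (f p)])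
    · exact ENNReal.ofReal_le_ofReal (by linarith [hgM q, abs_nonneg (f q)])
  refine ne_top_of_le_ne_top ?_ this
  exact ENNReal.add_ne_top.2 ⟨ENNReal.add_ne_top.2
    ⟨ENNReal.mul_ne_top (by simp) hf, by simp⟩, by simp⟩

theorem BVfun.le_uMax_of_tail_right {f : ℝ → ℝ} (hf : BVfun f) {A T : ℝ}
    (h : ∀ t, T ≤ t → A ≤ |f t|) (y : ℝ) : A ≤ uMax f y := by
  by_contra! hcon
  set d := A - uMax f y
  have hd : 0 < d := sub_pos.2 hcon
  set T₁ := max T y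
  have hT : T ≤ T₁ := le_max_left _ _
  have hy : y ≤ T₁ := le_max_right _ _
  have hg := hf.uMax_nonneg y
  have hs : 0 ≤ uMax f y * (T₁ - y) / d := div_nonneg (mul_nonneg hg (by linarith)) hd.le
  set S := T₁ + (uMax f y * (T₁ - y) / d + 1) with hS
  have h1 := hf.le_integral (a := T₁) (b := S) (K := A) (by linarith)
    fun t ht => h t (by linarith [ht.1])
  have h2 := integral_abs_mono hf hy (by linarith : T₁ ≤ S) le_rfl
  have h3 := hf.integral_le_uMax (by linarith : y ≤ S) le_rfl (by linarith)
  have h4 : d * (uMax f y * (T₁ - y) / d + 1) = uMax f y * (T₁ - y) + d := by field_simp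
  have h5 : A * (S - T₁) ≤ uMax f y * (S - T₁) + uMax f y * (T₁ - y) := by linarith
  have h6 : S - T₁ = uMax f y * (T₁ - y) / d + 1 := by rw [hS]; ring
  rw [h6] at h5
  have h7 : A = d + uMax f y := by simp [d]
  rw [h7] at h5
  linarith

theorem BVfun.le_uMax_of_tail_left {f : ℝ → ℝ} (hf : BVfun f) {A T : ℝ}
    (h : ∀ t, t ≤ T → A ≤ |f t|) (y : ℝ) : A ≤ uMax f y := by
  by_contra! hcon
  set d := A - uMax f y
  have hd : 0 < d := sub_pos.2 hcon
  set T₁ := min T y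
  have hT : T₁ ≤ T := min_le_left _ _
  have hy : T₁ ≤ y := min_le_right _ _
  have hg := hf.uMax_nonneg y
  have hs : 0 ≤ uMax f y * (y - T₁) / d := div_nonneg (mul_nonneg hg (by linarith)) hd.le
  set S := T₁ - (uMax f y * (y - T₁) / d + 1) with hS
  have h1 := hf.le_integral (a := S) (b := T₁) (K := A) (by linarith)
    fun t ht => h t (by linarith [ht.2])
  have h2 := integral_abs_mono hf le_rfl (by linarith : S ≤ T₁) hy
  have h3 := hf.integral_le_uMax (by linarith : S ≤ y) (by linarith) le_rfl
  have h4 : d * (uMax f y * (y - T₁) / d + 1) = uMax f y * (y - T₁) + d := by field_simp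
  have h5 : A * (T₁ - S) ≤ uMax f y * (T₁ - S) + uMax f y * (y - T₁) := by linarith
  have h6 : T₁ - S = uMax f y * (y - T₁) / d + 1 := by rw [hS]; ring
  rw [h6] at h5
  have h7 : A = d + uMax f y := by simp [d]
  rw [h7] at h5
  linarith

theorem BVfun.exists_uMax_le_add_of_far {f : ℝ → ℝ} (hf : BVfun f) {ε : ℝ} (hε : 0 < ε) :
    ∃ R, ∀ x, R ≤ |x| → ∀ y, uMax f x ≤ uMax f y + ε := by
  obtain ⟨M, hM0, hM⟩ := hf.exists_bound
  have hA := BoundedVariationOn.tendsto_atTop_limUnder hf.abs_bv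
  have hB := BoundedVariationOn.tendsto_atBot_limUnder hf.abs_bv
  set A := limUnder atTop fun x => |f x|
  set B := limUnder atBot fun x => |f x|
  have hε4 : 0 < ε / 4 := by linarith
  obtain ⟨T, hT⟩ := eventually_atTop.1 (Metric.tendsto_nhds.1 hA _ hε4)
  obtain ⟨T', hT'⟩ := eventually_atBot.1 (Metric.tendsto_nhds.1 hB _ hε4)
  simp only [Real.dist_eq, abs_lt] at hT hT'
  set L := max A B
  have hlow : ∀ y, L - ε / 4 ≤ uMax f y := fun y => by
    have h1 := hf.le_uMax_of_tail_right (A := A - ε / 4) (T := T)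
      (fun t ht => by linarith [(hT t ht).1]) y
    have h2 := hf.le_uMax_of_tail_left (A := B - ε / 4) (T := T')
      (fun t ht => by linarith [(hT' t ht).1]) y
    rcases max_cases A B with ⟨h, _⟩ | ⟨h, _⟩ <;> simp only [L, h] <;> linarith
  set r := max 1 (max T (-T'))
  have hr1 : 1 ≤ r := le_max_left _ _
  have hrT : T ≤ r := (le_max_left _ _).trans (le_max_right _ _)
  have hrT' : -r ≤ T' := by
    have : -T' ≤ r := (le_max_right _ _).trans (le_max_right _ _)
    linarith
  set K := L + ε / 4 with hK
  have hAL : A ≤ L := le_max_left _ _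
  have hBL : B ≤ L := le_max_right _ _
  have hK0 : 0 ≤ K := by
    have := abs_nonneg (f T); linarith [(hT T le_rfl).2]
  have hfr : ∀ t, r < t → |f t| ≤ K := fun t ht => by linarith [(hT t (by linarith)).2]
  have hfl : ∀ t, t < -r → |f t| ≤ K := fun t ht => by linarith [(hT' t (by linarith)).2]
  have hinteg : ∀ a b, a ≤ b → ∫ t in a..b, |f t| ≤ K * (b - a) + M * (2 * r) := by
    intro a b hab
    set a₁ := min b (max a (-r)) with ha₁
    set b₁ := min b (max a r) with hb₁
    have h1 : a ≤ a₁ := le_min hab (le_max_left _ _)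
    have h2 : a₁ ≤ b₁ := min_le_min_left _ (max_le_max_left _ (by linarith))
    have h3 : b₁ ≤ b := min_le_left _ _
    have h4 : b₁ - a₁ ≤ 2 * r := by
      rw [ha₁, hb₁]
      rcases max_cases a r with ⟨h, _⟩ | ⟨h, _⟩ <;> rcases max_cases a (-r) with ⟨h', _⟩ | ⟨h', _⟩ <;>
        rw [h, h'] <;>
        rcases min_cases b a with ⟨k, _⟩ | ⟨k, _⟩ <;> rcases min_cases b r with ⟨k', _⟩ | ⟨k', _⟩ <;>
        rcases min_cases b (-r) with ⟨k'', _⟩ | ⟨k'', _⟩ <;> simp only [k, k', k''] <;> linarith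
    have e1 := hf.integral_le (K := K) h1 fun t ht => hfl t (by
      have := ht.2.trans_le (min_le_right _ _)
      rcases lt_max_iff.1 this with h | h
      · linarith [ht.1]
      · exact h)
    have e2 := hf.integral_le (K := M) h2 fun t _ => hM t
    have e3 := hf.integral_le (K := K) h3 fun t ht => hfr t (by
      rcases min_lt_iff.1 ht.1 with h | h
      · linarith [ht.2]
      · exact (le_max_right _ _).trans_lt h)
    have e4 := hf.integral_add a a₁ b₁
    have e5 := hf.integral_add a b₁ b
    nlinarith
  refine ⟨r + M * (2 * r) * (4 / ε) + 1, fun x hx y => ?_⟩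
  have hlong : ∀ a b, a < b → r ≤ a ∨ b ≤ -r ∨ M * (2 * r) * (4 / ε) ≤ b - a →
      mAvg f a b ≤ L + ε / 2 := by
    intro a b hab hcase
    rw [mAvg_le_iff hab]
    have hba : 0 < b - a := sub_pos.2 hab
    rcases hcase with h | h | h
    · have := hf.integral_le (K := K) hab.le fun t ht => hfr t (by linarith [ht.1])
      nlinarith
    · have := hf.integral_le (K := K) hab.le fun t ht => hfl t (by linarith [ht.2])
      nlinarith
    · have h1 := hinteg a b hab.le
      have h2 : M * (2 * r) = M * (2 * r) * (4 / ε) * (ε / 4) := by field_simp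
      have h3 : M * (2 * r) ≤ (b - a) * (ε / 4) := by
        rw [h2]; exact mul_le_mul_of_nonneg_right h hε4.le
      rw [hK] at h1
      linarith
  have hbig : 0 ≤ M * (2 * r) * (4 / ε) := by positivity
  have : uMax f x ≤ L + ε / 2 := by
    rcases le_total 0 x with h0 | h0
    · rw [abs_of_nonneg h0] at hx
      refine uMax_le fun a b hab hax hxb => hlong a b hab ?_
      by_cases h : r ≤ a
      · exact Or.inl h
      · right; right; linarith [not_le.1 h]
    · rw [abs_of_nonpos h0] at hx
      refine uMax_le fun a b hab hax hxb => hlong a b hab ?_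
      by_cases h : b ≤ -r
      · exact Or.inr (Or.inl h)
      · right; right; linarith [not_le.1 h]
  linarith [hlow y]

/-! ### Asymptotic variation of a sequence -/

/-- The upper limit of the variations of `D j` on `s` is at most `c`. -/
def AsympVarLE (D : ℕ → ℝ → ℝ) (s : Set ℝ) (c : ℝ≥0∞) : Prop :=
  ∀ ε : ℝ, 0 < ε → ∀ᶠ j in atTop, eVariationOn (D j) s ≤ c + ENNReal.ofReal ε

theorem AsympVarLE.of_eventually {D : ℕ → ℝ → ℝ} {s : Set ℝ} {c : ℝ≥0∞}
    (h : ∀ᶠ j in atTop, eVariationOn (D j) s ≤ c) : AsympVarLE D s c :=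
  fun _ _ => h.mono fun _ hj => hj.trans le_self_add

theorem AsympVarLE.mono {D : ℕ → ℝ → ℝ} {s t : Set ℝ} {c d : ℝ≥0∞} (h : AsympVarLE D s c)
    (hts : t ⊆ s) (hcd : c ≤ d) : AsympVarLE D t d := fun ε hε =>
  (h ε hε).mono fun j hj => (eVariationOn.mono (D j) hts).trans (hj.trans (by gcongr))

theorem AsympVarLE.of_forall_pos {D : ℕ → ℝ → ℝ} {s : Set ℝ} {c : ℝ≥0∞}
    (h : ∀ ε : ℝ, 0 < ε → AsympVarLE D s (c + ENNReal.ofReal ε)) : AsympVarLE D s c :=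
  fun ε hε => (h (ε / 2) (by linarith) (ε / 2) (by linarith)).mono fun j hj => hj.trans (by
    rw [add_assoc, ← ENNReal.ofReal_add (by linarith) (by linarith), add_halves])

theorem AsympVarLE.of_le_add {D : ℕ → ℝ → ℝ} {s t r : Set ℝ} {c d : ℝ≥0∞}
    (hs : AsympVarLE D s c) (ht : AsympVarLE D t d)
    (h : ∀ j, eVariationOn (D j) r ≤ eVariationOn (D j) s + eVariationOn (D j) t) :
    AsympVarLE D r (c + d) := fun ε hε => by
  filter_upwards [hs (ε / 2) (by linarith), ht (ε / 2) (by linarith)] with j h1 h2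
  refine (h j).trans ((add_le_add h1 h2).trans (le_of_eq ?_))
  rw [add_add_add_comm, ← ENNReal.ofReal_add (by linarith) (by linarith), add_halves]

theorem AsympVarLE.Icc_union {D : ℕ → ℝ → ℝ} {x y z : ℝ} {c d : ℝ≥0∞} (hxy : x ≤ y) (hyz : y ≤ z)
    (h₁ : AsympVarLE D (Icc x y) c) (h₂ : AsympVarLE D (Icc y z) d) :
    AsympVarLE D (Icc x z) (c + d) := by
  refine h₁.of_le_add h₂ fun j => ?_
  have := eVariationOn.Icc_add_Icc (D j) (s := univ) hxy hyz (mem_univ _)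
  simp only [univ_inter] at this
  exact this.ge

theorem eVariationOn_le_of_ordConnected {u : ℝ → ℝ} {C : ℝ≥0∞} {s : Set ℝ} (hs : s.OrdConnected)
    (h : ∀ p ∈ s, ∀ q ∈ s, p ≤ q → eVariationOn u (Icc p q) ≤ C) : eVariationOn u s ≤ C := by
  rw [eVariationOn.eq_biSup_inter_Icc]
  refine iSup₂_le fun p hp => ?_
  rw [inter_eq_right.2 (hs.out hp.1 hp.2.1)]
  exact h _ hp.1 _ hp.2.1 hp.2.2

/-- Data of a sequence `F` converging to `f` in variation and uniformly, with rate `e`, each function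
being dominated everywhere by its maximal function. -/
structure BVApprox (f : ℝ → ℝ) (F : ℕ → ℝ → ℝ) (e : ℕ → ℝ) : Prop where
  bv : BVfun f
  bvj : ∀ j, BVfun (F j)
  dom : ∀ x, |f x| ≤ uMax f x
  domj : ∀ j x, |F j x| ≤ uMax (F j) x
  tendsto : Tendsto e atTop (𝓝 0)
  close : ∀ j x, |F j x - f x| ≤ e j
  var : ∀ j, eVariationOn (F j - f) univ ≤ ENNReal.ofReal (e j)

/-- The sequence of differences of maximal functions. -/
noncomputable def maxDiff (f : ℝ → ℝ) (F : ℕ → ℝ → ℝ) (j : ℕ) : ℝ → ℝ := uMax (F j) - uMax f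

namespace BVApprox

variable {f : ℝ → ℝ} {F : ℕ → ℝ → ℝ} {e : ℕ → ℝ}

theorem e_nonneg (H : BVApprox f F e) (j : ℕ) : 0 ≤ e j := (abs_nonneg _).trans (H.close j 0)

theorem eventually_le (H : BVApprox f F e) {ε : ℝ} (hε : 0 < ε) : ∀ᶠ j in atTop, e j ≤ ε :=
  (H.tendsto.eventually_lt_const hε).mono fun _ h => h.le

theorem var_le (H : BVApprox f F e) (j : ℕ) (s : Set ℝ) :
    eVariationOn (F j) s ≤ eVariationOn f s + ENNReal.ofReal (e j) := by
  have h1 : F j = (F j - f) + f := by simp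
  calc eVariationOn (F j) s = eVariationOn ((F j - f) + f) s := by rw [← h1]
    _ ≤ eVariationOn (F j - f) s + eVariationOn f s := eVariationOn_add_le _ _ _
    _ ≤ _ := by
      rw [add_comm]
      exact add_le_add_right ((eVariationOn.mono _ (subset_univ _)).trans (H.var j)) _

theorem close_uMax (H : BVApprox f F e) (j : ℕ) (x : ℝ) : |uMax (F j) x - uMax f x| ≤ e j :=
  abs_uMax_sub_le (H.bvj j) H.bv (H.close j) x

theorem continuous_maxDiff (H : BVApprox f F e) (j : ℕ) : Continuous (maxDiff f F j) :=
  ((H.bvj j).continuous_uMax (H.domj j)).sub (H.bv.continuous_uMax H.dom)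

end BVApprox

theorem BVfun.eVariationOn_uMax_le_of_band {u : ℝ → ℝ} (hu : BVfun u)
    (hdom : ∀ x, |u x| ≤ uMax u x) {p q c δ : ℝ} (hpq : p ≤ q)
    (hlow : ∀ t ∈ Icc p q, c ≤ uMax u t) (hup : ∀ t ∈ Icc p q, uMax u t ≤ c + δ) :
    eVariationOn (uMax u) (Icc p q) ≤
      2 * eVariationOn u (Icc p q) + ENNReal.ofReal δ + ENNReal.ofReal δ := by
  have h := hu.eVariationOn_uMax_le (h := fun x => max |u x| c) hpq
    (fun x _ => le_max_left _ _) (fun x hx => max_le (hdom x) (hlow x hx))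
  refine h.trans (add_le_add (add_le_add (mul_le_mul_right ?_ _) ?_) ?_)
  · exact (eVariationOn_max_const_le _ _ _).trans (eVariationOn_abs_le _ _)
  · apply ENNReal.ofReal_le_ofReal
    linarith [hup p (left_mem_Icc.2 hpq), le_max_right |u p| c]
  · apply ENNReal.ofReal_le_ofReal
    linarith [hup q (right_mem_Icc.2 hpq), le_max_right |u q| c]

namespace BVApprox

variable {f : ℝ → ℝ} {F : ℕ → ℝ → ℝ} {e : ℕ → ℝ}

theorem eVariationOn_maxDiff_le_of_band (H : BVApprox f F e) {ε p q c : ℝ} (hε : 0 < ε)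
    (hpq : p ≤ q) (hlow : ∀ t ∈ Icc p q, c - ε ≤ uMax f t)
    (hup : ∀ t ∈ Icc p q, uMax f t ≤ c + ε)
    (hvar : eVariationOn f (Icc p q) ≤ ENNReal.ofReal ε) {j : ℕ} (hj : e j ≤ ε) :
    eVariationOn (maxDiff f F j) (Icc p q) ≤ ENNReal.ofReal (24 * ε) := by
  have h1 := H.bv.eVariationOn_uMax_le_of_band H.dom (c := c - 2 * ε) (δ := 4 * ε) hpq
    (fun t ht => by linarith [hlow t ht]) (fun t ht => by linarith [hup t ht])
  have hc := fun t => abs_le.1 (H.close_uMax j t)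
  have h2 := (H.bvj j).eVariationOn_uMax_le_of_band (H.domj j) (c := c - 2 * ε) (δ := 4 * ε) hpq
    (fun t ht => by linarith [hlow t ht, (hc t).1]) (fun t ht => by linarith [hup t ht, (hc t).2])
  have h3 : eVariationOn (F j) (Icc p q) ≤ ENNReal.ofReal (2 * ε) := by
    refine (H.var_le j _).trans ((add_le_add hvar (ENNReal.ofReal_le_ofReal hj)).trans ?_)
    rw [← ENNReal.ofReal_add hε.le hε.le]
    exact ENNReal.ofReal_le_ofReal (by linarith)
  have h4 : eVariationOn f (Icc p q) ≤ ENNReal.ofReal (2 * ε) :=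
    hvar.trans (ENNReal.ofReal_le_ofReal (by linarith))
  have h5 : ∀ v : ℝ≥0∞, v ≤ ENNReal.ofReal (2 * ε) →
      2 * v + ENNReal.ofReal (4 * ε) + ENNReal.ofReal (4 * ε) ≤ ENNReal.ofReal (12 * ε) := by
    intro v hv
    calc _ ≤ 2 * ENNReal.ofReal (2 * ε) + ENNReal.ofReal (4 * ε) + ENNReal.ofReal (4 * ε) := by
          gcongr
      _ = _ := by
          rw [two_mul, ← ENNReal.ofReal_add (by linarith) (by linarith),
            ← ENNReal.ofReal_add (by linarith) (by linarith),
            ← ENNReal.ofReal_add (by linarith) (by linarith)]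
          congr 1; ring
  refine (eVariationOn_sub_le _ _ _).trans ((add_le_add (h2.trans (h5 _ h3))
    (h1.trans (h5 _ h4))).trans ?_)
  rw [← ENNReal.ofReal_add (by linarith) (by linarith)]
  exact ENNReal.ofReal_le_ofReal (by linarith)

theorem exists_asympVarLE_nhds (H : BVApprox f F e) (x : ℝ) {ε : ℝ} (hε : 0 < ε) :
    ∃ η > 0, AsympVarLE (maxDiff f F) (Icc (x - η) (x + η)) (ENNReal.ofReal ε) := by
  have hδ : 0 < ε / 48 := by linarith
  obtain ⟨η₁, hη₁, hl, hr⟩ := H.bv.exists_small_variation x hδ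
  obtain ⟨η₂, hη₂, hc⟩ := Metric.continuous_iff.1 (H.bv.continuous_uMax H.dom) x _ hδ
  simp only [Real.dist_eq, abs_lt] at hc
  set η := min η₁ (η₂ / 2)
  have hη : 0 < η := lt_min hη₁ (by linarith)
  have hη1 : η ≤ η₁ := min_le_left _ _
  have hη2 : η ≤ η₂ / 2 := min_le_right _ _
  refine ⟨η, hη, AsympVarLE.of_eventually ?_⟩
  filter_upwards [H.eventually_le hδ] with j hj
  have hcont := H.continuous_maxDiff j
  have e1 : eVariationOn (maxDiff f F j) (Icc (x - η) x) ≤ ENNReal.ofReal (24 * (ε / 48)) := by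
    rw [← eVariationOn.eVariationOn_Ico_eq_Icc_of_continuousWithinAt hcont.continuousWithinAt]
    refine eVariationOn_le_of_ordConnected ordConnected_Ico fun p hp q hq hpq => ?_
    refine H.eVariationOn_maxDiff_le_of_band (c := uMax f x) hδ hpq (fun t ht => ?_)
      (fun t ht => ?_) ((eVariationOn.mono _ ?_).trans hl) hj
    · linarith [(hc t ⟨by linarith [hp.1, ht.1], by linarith [hq.2, ht.2]⟩).1]
    · linarith [(hc t ⟨by linarith [hp.1, ht.1], by linarith [hq.2, ht.2]⟩).2]
    · exact fun t ht => ⟨by linarith [hp.1, ht.1], by linarith [hq.2, ht.2]⟩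
  have e2 : eVariationOn (maxDiff f F j) (Icc x (x + η)) ≤ ENNReal.ofReal (24 * (ε / 48)) := by
    rw [← eVariationOn.eVariationOn_Ioc_eq_Icc_of_continuousWithinAt hcont.continuousWithinAt]
    refine eVariationOn_le_of_ordConnected ordConnected_Ioc fun p hp q hq hpq => ?_
    refine H.eVariationOn_maxDiff_le_of_band (c := uMax f x) hδ hpq (fun t ht => ?_)
      (fun t ht => ?_) ((eVariationOn.mono _ ?_).trans hr) hj
    · linarith [(hc t ⟨by linarith [hp.1, ht.1], by linarith [hq.2, ht.2]⟩).1]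
    · linarith [(hc t ⟨by linarith [hp.1, ht.1], by linarith [hq.2, ht.2]⟩).2]
    · exact fun t ht => ⟨by linarith [hp.1, ht.1], by linarith [hq.2, ht.2]⟩
  have e3 := eVariationOn.Icc_add_Icc (maxDiff f F j) (s := univ) (by linarith : x - η ≤ x)
    (by linarith : x ≤ x + η) (mem_univ _)
  simp only [univ_inter] at e3
  rw [← e3]
  refine (add_le_add e1 e2).trans ?_
  rw [← ENNReal.ofReal_add (by linarith) (by linarith)]
  exact ENNReal.ofReal_le_ofReal (by linarith)

theorem exists_asympVarLE_tails (H : BVApprox f F e) {ε : ℝ} (hε : 0 < ε) :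
    ∃ R > 0, AsympVarLE (maxDiff f F) (Iic (-R)) (ENNReal.ofReal ε) ∧
      AsympVarLE (maxDiff f F) (Ici R) (ENNReal.ofReal ε) := by
  have hδ : 0 < ε / 24 := by linarith
  have hδ' : (0 : ℝ≥0∞) < ENNReal.ofReal (ε / 24) := ENNReal.ofReal_pos.2 hδ
  obtain ⟨R₁, hR₁⟩ := H.bv.exists_uMax_le_add_of_far hδ
  have ht := BoundedVariationOn.tendsto_eVariationOn_Ici_zero H.bv
  have hb := BoundedVariationOn.tendsto_eVariationOn_Iic_zero H.bv
  simp only [univ_inter, principal_univ, top_inf_eq] at ht hb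
  obtain ⟨R₂, hR₂⟩ := eventually_atTop.1 (ht.eventually_lt_const hδ')
  obtain ⟨R₃, hR₃⟩ := eventually_atBot.1 (hb.eventually_lt_const hδ')
  set R := max (max 1 R₁) (max R₂ (-R₃))
  have h1 : 1 ≤ R := (le_max_left _ _).trans (le_max_left _ _)
  have h2 : R₁ ≤ R := (le_max_right _ _).trans (le_max_left _ _)
  have h3 : R₂ ≤ R := (le_max_left _ _).trans (le_max_right _ _)
  have h4 : -R₃ ≤ R := (le_max_right _ _).trans (le_max_right _ _)
  have hfar : ∀ x, R ≤ |x| → ∀ y, uMax f x ≤ uMax f y + ε / 24 := fun x hx =>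
    hR₁ x (h2.trans hx)
  have hRR : R ≤ |R| := le_abs_self R
  refine ⟨R, by linarith, AsympVarLE.of_eventually ?_, AsympVarLE.of_eventually ?_⟩
  · filter_upwards [H.eventually_le hδ] with j hj
    refine eVariationOn_le_of_ordConnected ordConnected_Iic fun p hp q hq hpq => ?_
    have := H.eVariationOn_maxDiff_le_of_band (c := uMax f R) hδ hpq (fun t ht => ?_)
      (fun t ht => ?_) ((eVariationOn.mono _ ?_).trans (hR₃ (-R) (by linarith)).le) hj
    · refine this.trans (ENNReal.ofReal_le_ofReal (by linarith))
    · linarith [hfar R hRR t]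
    · refine hfar t ?_ R
      have := ht.2.trans hq
      rw [abs_of_nonpos (by linarith)]; linarith
    · exact fun t ht => ht.2.trans hq
  · filter_upwards [H.eventually_le hδ] with j hj
    refine eVariationOn_le_of_ordConnected ordConnected_Ici fun p hp q hq hpq => ?_
    have := H.eVariationOn_maxDiff_le_of_band (c := uMax f R) hδ hpq (fun t ht => ?_)
      (fun t ht => ?_) ((eVariationOn.mono _ ?_).trans (hR₂ R h3).le) hj
    · refine this.trans (ENNReal.ofReal_le_ofReal (by linarith))
    · linarith [hfar R hRR t]
    · exact hfar t ((le_trans hp ht.1).trans (le_abs_self _)) R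
    · exact fun t ht => le_trans hp ht.1

end BVApprox

/-! ### Almost convex functions -/

/-- Slopes of `u` on `[α, β]` increase up to the increments of `m`. -/
def AlmostConvex (u m : ℝ → ℝ) (α β : ℝ) : Prop :=
  ∀ x y z, α ≤ x → x < y → y < z → z ≤ β →
    (u y - u x) / (y - x) ≤ (u z - u y) / (z - y) + (m z - m x)

theorem AlmostConvex.slope_le_right {u m : ℝ → ℝ} {α β : ℝ} (h : AlmostConvex u m α β)
    (hm : MonotoneOn m (Icc α β)) {a x y c d : ℝ} (ha : α ≤ a) (hax : a ≤ x) (hxy : x < y)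
    (hyc : y ≤ c) (hcd : c < d) (hd : d ≤ β) :
    (u y - u x) / (y - x) ≤ (u d - u c) / (d - c) + 2 * (m d - m a) := by
  have hmax : m a ≤ m x := hm ⟨ha, by linarith⟩ ⟨by linarith, by linarith⟩ hax
  have hmxy : m x ≤ m y := hm ⟨by linarith, by linarith⟩ ⟨by linarith, by linarith⟩ hxy.le
  have hmyc : m y ≤ m c := hm ⟨by linarith, by linarith⟩ ⟨by linarith, by linarith⟩ hyc
  have hmcd : m c ≤ m d := hm ⟨by linarith, by linarith⟩ ⟨by linarith, by linarith⟩ hcd.le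
  rcases hyc.eq_or_lt with rfl | hyc
  · have := h x y d (by linarith) hxy hcd hd
    linarith
  · have h1 := h x y c (by linarith) hxy hyc (by linarith)
    have h2 := h y c d (by linarith) hyc hcd hd
    linarith

theorem AlmostConvex.le_slope_left {u m : ℝ → ℝ} {α β : ℝ} (h : AlmostConvex u m α β)
    (hm : MonotoneOn m (Icc α β)) {a b x y d : ℝ} (ha : α ≤ a) (hab : a < b) (hbx : b ≤ x)
    (hxy : x < y) (hyd : y ≤ d) (hd : d ≤ β) :
    (u b - u a) / (b - a) ≤ (u y - u x) / (y - x) + 2 * (m d - m a) := by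
  have hmab : m a ≤ m b := hm ⟨ha, by linarith⟩ ⟨by linarith, by linarith⟩ hab.le
  have hmbx : m b ≤ m x := hm ⟨by linarith, by linarith⟩ ⟨by linarith, by linarith⟩ hbx
  have hmxy : m x ≤ m y := hm ⟨by linarith, by linarith⟩ ⟨by linarith, by linarith⟩ hxy.le
  have hmyd : m y ≤ m d := hm ⟨by linarith, by linarith⟩ ⟨by linarith, by linarith⟩ hyd
  rcases hbx.eq_or_lt with rfl | hbx
  · have := h a b y ha hab hxy (by linarith)
    linarith
  · have h1 := h a b x ha hab hbx (by linarith)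
    have h2 := h b x y (by linarith) hbx hxy (by linarith)
    linarith

theorem AlmostConvex.abs_sub_le {u w m : ℝ → ℝ} {α β η : ℝ} (hu : AlmostConvex u m α β)
    (hw : AlmostConvex w m α β) (hm : MonotoneOn m (Icc α β))
    (hclose : ∀ x ∈ Icc α β, |w x - u x| ≤ η) {a b x y c d h : ℝ} (hh : 0 < h) (ha : α ≤ a)
    (hab : b - a = h) (hbx : b ≤ x) (hxy : x ≤ y) (hyc : y ≤ c) (hcd : d - c = h) (hd : d ≤ β) :
    |(w y - u y) - (w x - u x)| ≤
      ((u d - u c) - (u b - u a) + 2 * η + 4 * h * (m d - m a)) / h * (y - x) := by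
  rcases hxy.eq_or_lt with rfl | hxy
  · simp
  have hyx : 0 < y - x := sub_pos.2 hxy
  have u1 := hu.slope_le_right hm ha (by linarith) hxy hyc (by linarith : c < d) hd
  have w1 := hw.slope_le_right hm ha (by linarith) hxy hyc (by linarith : c < d) hd
  have u2 := hu.le_slope_left hm ha (by linarith : a < b) hbx hxy (by linarith : y ≤ d) hd
  have w2 := hw.le_slope_left hm ha (by linarith : a < b) hbx hxy (by linarith : y ≤ d) hd
  rw [hab] at u2 w2
  rw [hcd] at u1 w1
  have ca := abs_le.1 (hclose a ⟨by linarith, by linarith⟩)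
  have cb := abs_le.1 (hclose b ⟨by linarith, by linarith⟩)
  have cc := abs_le.1 (hclose c ⟨by linarith, by linarith⟩)
  have cd := abs_le.1 (hclose d ⟨by linarith, by linarith⟩)
  have k1 : (w d - w c) / h ≤ (u d - u c + 2 * η) / h :=
    div_le_div_of_nonneg_right (by linarith) hh.le
  have k2 : (u b - u a - 2 * η) / h ≤ (w b - w a) / h :=
    div_le_div_of_nonneg_right (by linarith) hh.le
  have e : ((u d - u c) - (u b - u a) + 2 * η + 4 * h * (m d - m a)) / h =
      (u d - u c + 2 * η) / h - (u b - u a) / h + 4 * (m d - m a) := by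
    field_simp; ring
  have e' : (u d - u c + 2 * η) / h - (u b - u a) / h =
      (u d - u c) / h - (u b - u a - 2 * η) / h := by
    field_simp; ring
  rw [← div_le_iff₀ hyx, ← abs_of_pos hyx, ← abs_div]
  have e'' : ((w y - u y) - (w x - u x)) / (y - x) =
      (w y - w x) / (y - x) - (u y - u x) / (y - x) := by
    field_simp; ring
  rw [e'', e, abs_le]
  constructor <;> linarith

theorem eVariationOn_sub_le_of_almostConvex {u w m : ℝ → ℝ} {α β η : ℝ} (hαβ : α < β)
    (hu : AlmostConvex u m α β) (hw : AlmostConvex w m α β) (hm : MonotoneOn m (Icc α β))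
    (hclose : ∀ x ∈ Icc α β, |w x - u x| ≤ η) (N : ℕ) {h : ℝ} (hh : h = (β - α) / (N + 2)) :
    eVariationOn (w - u) (Icc (α + h) (β - h)) ≤
      ENNReal.ofReal ((u β - u (β - 2 * h)) - (u (α + 2 * h) - u α) + 2 * N * η
        + 12 * h * (m β - m α)) := by
  have hN : (0 : ℝ) < N + 2 := by positivity
  have hpos : 0 < h := by rw [hh]; exact div_pos (sub_pos.2 hαβ) hN
  have hNh : (N + 2) * h = β - α := by rw [hh]; field_simp
  set t : ℕ → ℝ := fun k => α + k * h with ht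
  have htm : Monotone t := fun i j hij => by
    have : (i : ℝ) ≤ j := by exact_mod_cast hij
    simp only [ht]; nlinarith
  have hts : ∀ k, t (k + 1) - t k = h := fun k => by simp only [ht]; push_cast; ring
  have ht0 : t 0 = α := by simp [ht]
  have htN : t (N + 2) = β := by simp only [ht]; push_cast; linarith
  have htle : ∀ k, k ≤ N + 2 → t k ≤ β := fun k hk => htN ▸ htm hk
  have hαt : ∀ k, α ≤ t k := fun k => ht0 ▸ htm (Nat.zero_le k)
  set c : ℕ → ℝ := fun k => (u (t (k + 3)) - u (t (k + 2))) - (u (t (k + 1)) - u (t k)) + 2 * η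
    + 4 * h * (m (t (k + 3)) - m (t k)) with hc
  have hcell : ∀ k < N, ∀ x y, t (k + 1) ≤ x → x ≤ y → y ≤ t (k + 2) →
      |(w - u) y - (w - u) x| ≤ c k / h * y - c k / h * x := by
    intro k hk x y hx hxy hy
    have := hu.abs_sub_le hw hm hclose hpos (hαt k) (hts k) hx hxy hy (hts (k + 2))
      (htle _ (by omega))
    rw [← mul_sub]
    exact this
  have hc0 : ∀ k < N, 0 ≤ c k := by
    intro k hk
    have := hcell k hk (t (k + 1)) (t (k + 2)) le_rfl (htm (by omega)) le_rfl
    rw [← mul_sub, hts (k + 1), div_mul_cancel₀ _ hpos.ne'] at this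
    exact (abs_nonneg _).trans this
  have hvar : ∀ k < N, eVariationOn (w - u) (Icc (t (k + 1)) (t (k + 2))) ≤
      ENNReal.ofReal (c k) := by
    intro k hk
    have := eVariationOn_le_of_majorant (htm (by omega)) (hcell k hk)
    rwa [← mul_sub, hts (k + 1), div_mul_cancel₀ _ hpos.ne'] at this
  have h1 : t 1 = α + h := by simp [ht]
  have h2 : t (N + 1) = β - h := by linarith [hts (N + 1)]
  have hsum := eVariationOn.sum' (w - u) (I := fun k => t (k + 1)) (n := N)
    (fun i j hij => htm (by omega))
  simp only [zero_add, h1, h2] at hsum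
  rw [← hsum]
  calc _ ≤ ∑ k ∈ Finset.range N, ENNReal.ofReal (c k) :=
        Finset.sum_le_sum fun k hk => hvar k (Finset.mem_range.1 hk)
    _ = ENNReal.ofReal (∑ k ∈ Finset.range N, c k) :=
        (ENNReal.ofReal_sum_of_nonneg fun k hk => hc0 k (Finset.mem_range.1 hk)).symm
    _ ≤ _ := by
        apply ENNReal.ofReal_le_ofReal
        have tele : ∀ n : ℕ, ∑ k ∈ Finset.range n, c k =
            (u (t (n + 2)) - u (t 2)) - (u (t n) - u (t 0)) + 2 * n * η
            + 4 * h * ((m (t (n + 2)) + m (t (n + 1)) + m (t n))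
              - (m (t 2) + m (t 1) + m (t 0))) := by
          intro n
          induction n with
          | zero => simp
          | succ n ih => rw [Finset.sum_range_succ, ih]; simp only [hc]; push_cast; ring
        rw [tele N, htN, ht0]
        have e2 : t 2 = α + 2 * h := by simp [ht]
        have e3 : t N = β - 2 * h := by linarith [hts N]
        have hmα : ∀ k, k ≤ N + 2 → m α ≤ m (t k) ∧ m (t k) ≤ m β := fun k hk =>
          ⟨hm ⟨le_rfl, hαβ.le⟩ ⟨hαt k, htle k hk⟩ (hαt k),
            hm ⟨hαt k, htle k hk⟩ ⟨hαβ.le, le_rfl⟩ (htle k hk)⟩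
        have b1 := (hmα 1 (by omega)).1
        have b2 := (hmα 2 (by omega)).1
        have b3 := (hmα N (by omega)).2
        have b4 := (hmα (N + 1) (by omega)).2
        have b5 : (m β + m (t (N + 1)) + m (t N)) - (m (t 2) + m (t 1) + m α) ≤
            3 * (m β - m α) := by linarith
        have b6 := mul_le_mul_of_nonneg_left b5 (by linarith : 0 ≤ 4 * h)
        rw [e2, e3] at *
        linarith

theorem slope_average_le {a b c l₁ l₂ r κ M D : ℝ} (h₁ : 0 < l₁) (h₂ : 0 < l₂) (hκ : 0 < κ)
    (hr : κ ≤ r) (hab : b - a ≤ D) (hD : 0 ≤ D) (hbc : b - c ≤ M) (hM : 0 ≤ M) :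
    (l₁ + l₂) * ((b * l₂ + c * r) / (l₂ + r)) ≤
      l₂ * ((a * l₁ + b * l₂ + c * r) / (l₁ + l₂ + r)) + l₁ * c +
        l₁ * l₂ * (D / κ + M * (l₁ + l₂) / κ ^ 2) := by
  have hr0 : 0 < r := hκ.trans_le hr
  have id1 : (l₁ + l₂) * ((b * l₂ + c * r) / (l₂ + r)) -
      (l₂ * ((a * l₁ + b * l₂ + c * r) / (l₁ + l₂ + r)) + l₁ * c) =
      l₁ * l₂ * ((b - a) / (l₁ + l₂ + r) +
        (b - c) * (l₁ + l₂) / ((l₂ + r) * (l₁ + l₂ + r))) := by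
    field_simp; ring
  have h3 : (b - a) / (l₁ + l₂ + r) ≤ D / κ :=
    div_le_div₀ hD hab hκ (by linarith)
  have h4 : (b - c) * (l₁ + l₂) / ((l₂ + r) * (l₁ + l₂ + r)) ≤ M * (l₁ + l₂) / κ ^ 2 := by
    refine div_le_div₀ (by positivity) (by gcongr) (by positivity) ?_
    nlinarith
  have h5 := mul_le_mul_of_nonneg_left (add_le_add h3 h4) (mul_pos h₁ h₂).le
  linarith

theorem almostConvex_iff_mul {u m : ℝ → ℝ} {α β : ℝ} :
    AlmostConvex u m α β ↔ ∀ x y z, α ≤ x → x < y → y < z → z ≤ β →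
      (z - x) * u y ≤ (z - y) * u x + (y - x) * u z + (y - x) * (z - y) * (m z - m x) := by
  unfold AlmostConvex
  refine forall_congr' fun x => forall_congr' fun y => forall_congr' fun z =>
    imp_congr_right fun _ => imp_congr_right fun hxy => imp_congr_right fun hyz =>
    imp_congr_right fun _ => ?_
  have h1 : 0 < y - x := sub_pos.2 hxy
  have h2 : 0 < z - y := sub_pos.2 hyz
  have e : (u z - u y) / (z - y) + (m z - m x) - (u y - u x) / (y - x) =
    ((z - y) * u x + (y - x) * u z + (y - x) * (z - y) * (m z - m x) - (z - x) * u y) /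
      ((y - x) * (z - y)) := by
    field_simp; ring
  rw [← sub_nonneg, e, ← sub_nonneg (b := (z - x) * u y)]
  exact ⟨fun h => by
    by_contra! hc
    exact absurd h (not_le.2 (div_neg_of_neg_of_pos hc (mul_pos h1 h2))),
    fun h => div_nonneg h (mul_pos h1 h2).le⟩

theorem BVfun.almostConvex_uMax {w V : ℝ → ℝ} (hw : BVfun w) {M α β κ : ℝ} (hκ : 0 < κ)
    (hM : ∀ x, |w x| ≤ M) (hV : ∀ x y, α ≤ x → x ≤ y → y ≤ β → |w y - w x| ≤ V y - V x)
    (hfar : ∀ y, α ≤ y → y ≤ β → ∀ K < uMax w y,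
      (∃ t, β + κ ≤ t ∧ K < mAvg w y t) ∨ ∃ s, s ≤ α - κ ∧ K < mAvg w s y) :
    AlmostConvex (uMax w) (fun x => V x / κ + M * x / κ ^ 2) α β := by
  rw [almostConvex_iff_mul]
  intro x y z hx hxy hyz hz
  have hM0 : 0 ≤ M := (abs_nonneg _).trans (hM 0)
  have l1 : 0 < y - x := sub_pos.2 hxy
  have l2 : 0 < z - y := sub_pos.2 hyz
  have hD0 : 0 ≤ V z - V x := (abs_nonneg _).trans (hV x z hx (by linarith) hz)
  have hm : (V z / κ + M * z / κ ^ 2) - (V x / κ + M * x / κ ^ 2) =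
      (V z - V x) / κ + M * ((y - x) + (z - y)) / κ ^ 2 := by
    field_simp; ring
  have hosc : ∀ s ∈ Icc x y, ∀ t ∈ Icc y z, |w t| - |w s| ≤ V z - V x ∧
      |w s| - |w t| ≤ V z - V x := by
    intro s hs t ht
    have h1 := hV s t (by linarith [hs.1]) (by linarith [hs.2, ht.1]) (by linarith [ht.2])
    have h2 := (abs_nonneg _).trans (hV x s hx hs.1 (by linarith [hs.2]))
    have h3 := (abs_nonneg _).trans (hV t z (by linarith [ht.1]) ht.2 hz)
    have h4 := abs_sub_abs_le_abs_sub (w t) (w s)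
    have h5 := abs_sub_abs_le_abs_sub (w s) (w t)
    rw [abs_sub_comm] at h5
    constructor <;> linarith
  set p := mAvg w x y with hp
  set q := mAvg w y z with hq
  have hpI : ∫ t in x..y, |w t| = p * (y - x) := by
    rw [hp, mAvg, div_mul_cancel₀ _ l1.ne']
  have hqI : ∫ t in y..z, |w t| = q * (z - y) := by
    rw [hq, mAvg, div_mul_cancel₀ _ l2.ne']
  have hqp : ∀ t ∈ Icc y z, |w t| - p ≤ V z - V x := fun t ht => by
    have : |w t| - (V z - V x) ≤ p := (le_mAvg_iff hxy).2
      (hw.le_integral hxy.le fun s hs => by linarith [(hosc s (Ioo_subset_Icc_self hs) t ht).1])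
    linarith
  have hpq : ∀ s ∈ Icc x y, |w s| - q ≤ V z - V x := fun s hs => by
    have : |w s| - (V z - V x) ≤ q := (le_mAvg_iff hyz).2
      (hw.le_integral hyz.le fun t ht => by linarith [(hosc s hs t (Ioo_subset_Icc_self ht)).2])
    linarith
  have hqp' : q - p ≤ V z - V x := by
    have : q ≤ V z - V x + p :=
      hw.mAvg_le hyz fun t ht => by linarith [hqp t (Ioo_subset_Icc_self ht)]
    linarith
  have hpq' : p - q ≤ V z - V x := by
    have : p ≤ V z - V x + q :=
      hw.mAvg_le hxy fun t ht => by linarith [hpq t (Ioo_subset_Icc_self ht)]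
    linarith
  have hpM : p ≤ M := hw.mAvg_le hxy fun t _ => hM t
  have hqM : q ≤ M := hw.mAvg_le hyz fun t _ => hM t
  have hzx : 0 < z - x := by linarith
  rw [hm, mul_comm (z - x), ← le_div_iff₀ hzx]
  refine le_of_forall_lt fun K hK => ?_
  rw [lt_div_iff₀ hzx]
  rcases hfar y (by linarith) (by linarith) K hK with ⟨t, ht, hKt⟩ | ⟨s, hs, hKs⟩
  · have hzt : z < t := by linarith
    set r := t - z with hr
    have hrκ : κ ≤ r := by rw [hr]; linarith
    have hr0 : 0 < r := by linarith
    set c := mAvg w z t with hc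
    have hcI : ∫ τ in z..t, |w τ| = c * r := by
      rw [hc, mAvg, div_mul_cancel₀ _ hr0.ne']
    have hc0 : 0 ≤ c := mAvg_nonneg hzt.le
    have key := slope_average_le (c := c) (M := M) l1 l2 hκ hrκ hqp' hD0 (by linarith) hM0
    have i1 : mAvg w y t = (q * (z - y) + c * r) / ((z - y) + r) := by
      rw [mAvg, ← hw.integral_add y z t, hqI, hcI]; congr 1; rw [hr]; ring
    have i2 : (p * (y - x) + q * (z - y) + c * r) / ((y - x) + (z - y) + r) ≤ uMax w x := by
      have := hw.mAvg_le_uMax (by linarith : x < t) le_rfl (by linarith)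
      rw [mAvg, ← hw.integral_add x z t, ← hw.integral_add x y z, hpI, hqI, hcI] at this
      convert this using 2; rw [hr]; ring
    have i3 : c ≤ uMax w z := hw.mAvg_le_uMax hzt le_rfl hzt.le
    rw [← i1] at key
    have j1 := mul_lt_mul_of_pos_right hKt hzx
    have j2 := mul_le_mul_of_nonneg_left i2 l2.le
    have j3 := mul_le_mul_of_nonneg_left i3 l1.le
    have e : (y - x) + (z - y) = z - x := by ring
    rw [e] at key ⊢
    rw [e] at j2
    linarith
  · have hsx : s < x := by linarith
    set r := x - s with hr
    have hrκ : κ ≤ r := by rw [hr]; linarith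
    have hr0 : 0 < r := by linarith
    set c := mAvg w s x with hc
    have hcI : ∫ τ in s..x, |w τ| = c * r := by
      rw [hc, mAvg, div_mul_cancel₀ _ hr0.ne']
    have hc0 : 0 ≤ c := mAvg_nonneg hsx.le
    have key := slope_average_le (c := c) (M := M) l2 l1 hκ hrκ hpq' hD0 (by linarith) hM0
    have i1 : mAvg w s y = (p * (y - x) + c * r) / ((y - x) + r) := by
      rw [mAvg, ← hw.integral_add s x y, hpI, hcI]; congr 1
      · ring
      · rw [hr]; ring
    have i2 : (q * (z - y) + p * (y - x) + c * r) / ((z - y) + (y - x) + r) ≤ uMax w z := by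
      have := hw.mAvg_le_uMax (by linarith : s < z) (by linarith) le_rfl
      rw [mAvg, ← hw.integral_add s x z, ← hw.integral_add x y z, hpI, hqI, hcI] at this
      convert this using 2
      · ring
      · rw [hr]; ring
    have i3 : c ≤ uMax w x := hw.mAvg_le_uMax hsx hsx.le le_rfl
    rw [← i1] at key
    have j1 := mul_lt_mul_of_pos_right hKs hzx
    have j2 := mul_le_mul_of_nonneg_left i2 l1.le
    have j3 := mul_le_mul_of_nonneg_left i3 l2.le
    have e : (y - x) + (z - y) = z - x := by ring
    have e' : (z - y) + (y - x) = z - x := by ring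
    rw [e'] at key j2
    rw [e]
    linarith

/-! ### Detached and contact points -/

/-- Points near which `|f|` comes arbitrarily close to the value of the maximal function. -/
def contactSet (f : ℝ → ℝ) : Set ℝ :=
  {x | ∀ δ > 0, ∃ t, |t - x| < δ ∧ uMax f x - δ < |f t|}

theorem isClosed_contactSet {f : ℝ → ℝ} (hg : Continuous (uMax f)) : IsClosed (contactSet f) := by
  rw [← isOpen_compl_iff, Metric.isOpen_iff]
  intro x hx
  simp only [contactSet, mem_compl_iff, mem_ofPred_eq, not_forall, not_exists, not_and, not_lt] at hx
  obtain ⟨δ, hδ, h⟩ := hx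
  obtain ⟨η, hη, hc⟩ := Metric.continuous_iff.1 hg x (δ / 2) (by linarith)
  simp only [Real.dist_eq, abs_lt] at hc
  refine ⟨min η (δ / 2), lt_min hη (by linarith), fun y hy hyc => ?_⟩
  rw [Metric.mem_ball, Real.dist_eq, lt_min_iff] at hy
  obtain ⟨t, ht, hft⟩ := hyc (δ / 2) (by linarith)
  have h1 := h t (by
    have := abs_add_le (t - y) (y - x)
    rw [sub_add_sub_cancel] at this
    linarith)
  linarith [(hc y (abs_lt.1 hy.1)).1]

theorem BVfun.exists_far_average {w : ℝ → ℝ} (hw : BVfun w) {x₀ δ A ρ : ℝ} (hδ : 0 < δ)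
    (hρ : 8 * ρ ≤ δ) (hA : ∀ t, |t - x₀| < δ → |w t| ≤ A)
    (hg : ∀ y, x₀ - 2 * ρ ≤ y → y ≤ x₀ + 2 * ρ → A < uMax w y) (y : ℝ)
    (hy : x₀ - 2 * ρ ≤ y) (hy' : y ≤ x₀ + 2 * ρ) (K : ℝ) (hK : K < uMax w y) :
    (∃ t, x₀ + 2 * ρ + δ / 4 ≤ t ∧ K < mAvg w y t) ∨
      ∃ s, s ≤ x₀ - 2 * ρ - δ / 4 ∧ K < mAvg w s y := by
  have hK' : max K A < uMax w y := max_lt hK (hg y hy hy')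
  rcases hw.exists_lt_mAvg_oneSided hK' with ⟨t, hyt, ht⟩ | ⟨s, hsy, hs⟩
  · refine Or.inl ⟨t, ?_, (le_max_left _ _).trans_lt ht⟩
    by_contra! hcon
    have := hw.mAvg_le hyt (K := A) fun r hr => hA r (by
      rw [abs_lt]; constructor <;> linarith [hr.1, hr.2])
    linarith [le_max_right K A]
  · refine Or.inr ⟨s, ?_, (le_max_left _ _).trans_lt hs⟩
    by_contra! hcon
    have := hw.mAvg_le hsy (K := A) fun r hr => hA r (by
      rw [abs_lt]; constructor <;> linarith [hr.1, hr.2])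
    linarith [le_max_right K A]

namespace BVApprox

variable {f : ℝ → ℝ} {F : ℕ → ℝ → ℝ} {e : ℕ → ℝ}

theorem eVariationOn_maxDiff_le_of_gap (H : BVApprox f F e) {x₀ δ ρ M : ℝ} (hδ : 0 < δ)
    (hρ0 : 0 < ρ) (hρ : 8 * ρ ≤ δ) (hM0 : 0 ≤ M) (hM : ∀ x, |f x| ≤ M)
    (hA : ∀ t, |t - x₀| < δ → |f t| ≤ uMax f x₀ - δ)
    (hg : ∀ y, |y - x₀| ≤ 2 * ρ → uMax f x₀ - δ / 4 ≤ uMax f y) {j : ℕ} (hj : e j ≤ δ / 8)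
    (hj1 : e j ≤ 1) {N : ℕ} {h : ℝ} (hh : h = 4 * ρ / (N + 2)) (hN : 2 ≤ N) :
    eVariationOn (maxDiff f F j) (Icc (x₀ - ρ) (x₀ + ρ)) ≤
      ENNReal.ofReal ((uMax f (x₀ + 2 * ρ) - uMax f (x₀ + 2 * ρ - 2 * h))
        - (uMax f (x₀ - 2 * ρ + 2 * h) - uMax f (x₀ - 2 * ρ)) + 2 * N * e j
        + 12 * h * ((2 * (eVariationOn f univ).toReal + 1) / (δ / 4) +
          (M + 1) * (4 * ρ) / (δ / 4) ^ 2)) := by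
  set α := x₀ - 2 * ρ with hα
  set β := x₀ + 2 * ρ with hβ
  have hαβ : α < β := by linarith
  have hκ : 0 < δ / 4 := by linarith
  have hfin : eVariationOn f (Icc α β) ≠ ⊤ :=
    ne_top_of_le_ne_top H.bv (eVariationOn.mono _ (subset_univ _))
  have hfinj : eVariationOn (F j) (Icc α β) ≠ ⊤ :=
    ne_top_of_le_ne_top (H.bvj j) (eVariationOn.mono _ (subset_univ _))
  obtain ⟨V, hV, hV0, hV1⟩ := exists_variation_function hαβ.le hfin
  obtain ⟨W, hW, hW0, hW1⟩ := exists_variation_function hαβ.le hfinj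
  have hf_far := H.bv.exists_far_average hδ hρ hA (fun y h1 h2 => by
    linarith [hg y (abs_le.2 ⟨by linarith, by linarith⟩)])
  have hF_far := (H.bvj j).exists_far_average (A := uMax f x₀ - δ + δ / 8) hδ hρ (fun t ht => by
    have := H.close j t
    have h2 := abs_sub_abs_le_abs_sub (F j t) (f t)
    linarith [hA t ht]) (fun y h1 h2 => by
    linarith [hg y (abs_le.2 ⟨by linarith, by linarith⟩), (abs_le.1 (H.close_uMax j y)).1])
  have hu := H.bv.almostConvex_uMax (V := fun x => V x + W x) (M := M + 1) hκ
    (fun x => by linarith [hM x]) (fun x y h1 h2 h3 => by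
      have k1 := hV x y h1 h2 h3
      have k2 := (abs_nonneg _).trans (hW x y h1 h2 h3)
      linarith) hf_far
  have hw := (H.bvj j).almostConvex_uMax (V := fun x => V x + W x) (M := M + 1) hκ
    (fun x => by
      have := H.close j x
      have h2 := abs_sub_abs_le_abs_sub (F j x) (f x)
      linarith [hM x]) (fun x y h1 h2 h3 => by
      have k1 := hW x y h1 h2 h3
      have k2 := (abs_nonneg _).trans (hV x y h1 h2 h3)
      linarith) hF_far
  have hm : MonotoneOn (fun x => (V x + W x) / (δ / 4) + (M + 1) * x / (δ / 4) ^ 2) (Icc α β) := by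
    intro x hx y hy hxy
    have k1 := (abs_nonneg _).trans (hV x y hx.1 hxy hy.2)
    have k2 := (abs_nonneg _).trans (hW x y hx.1 hxy hy.2)
    refine add_le_add (div_le_div_of_nonneg_right (by linarith) hκ.le) ?_
    exact div_le_div_of_nonneg_right (mul_le_mul_of_nonneg_left hxy (by linarith)) (by positivity)
  have hN' : (2 : ℝ) ≤ N := by exact_mod_cast hN
  have hN0 : (0 : ℝ) < N + 2 := by linarith
  have hh0 : 0 < h := by rw [hh]; positivity
  have hhρ : h ≤ ρ := by rw [hh, div_le_iff₀ hN0]; nlinarith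
  have key := eVariationOn_sub_le_of_almostConvex hαβ hu hw hm
    (fun x _ => H.close_uMax j x) N (h := h) (by rw [hh]; congr 1; ring)
  refine (eVariationOn.mono _ (Icc_subset_Icc (by linarith) (by linarith))).trans (key.trans ?_)
  apply ENNReal.ofReal_le_ofReal
  have hT : V β ≤ (eVariationOn f univ).toReal := by
    rw [hV1]; exact ENNReal.toReal_mono H.bv (eVariationOn.mono _ (subset_univ _))
  have hT' : W β ≤ (eVariationOn f univ).toReal + 1 := by
    rw [hW1]
    have h1 := (H.var_le j (Icc α β)).trans (add_le_add
      (eVariationOn.mono f (subset_univ _)) (ENNReal.ofReal_le_ofReal hj1))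
    have h2 := ENNReal.toReal_mono (ENNReal.add_ne_top.2 ⟨H.bv, ENNReal.ofReal_ne_top⟩) h1
    rwa [ENNReal.toReal_add H.bv ENNReal.ofReal_ne_top, ENNReal.toReal_ofReal zero_le_one] at h2
  have hfinal : ((V β + W β) / (δ / 4) + (M + 1) * β / (δ / 4) ^ 2) -
      ((V α + W α) / (δ / 4) + (M + 1) * α / (δ / 4) ^ 2) ≤
      (2 * (eVariationOn f univ).toReal + 1) / (δ / 4) + (M + 1) * (4 * ρ) / (δ / 4) ^ 2 := by
    have e1 : (M + 1) * β / (δ / 4) ^ 2 - (M + 1) * α / (δ / 4) ^ 2 =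
      (M + 1) * (4 * ρ) / (δ / 4) ^ 2 := by rw [hα, hβ]; ring
    have e2 : (V β + W β) / (δ / 4) ≤ (2 * (eVariationOn f univ).toReal + 1) / (δ / 4) :=
      div_le_div_of_nonneg_right (by linarith) hκ.le
    have e3 : (V α + W α) / (δ / 4) = 0 := by rw [hV0, hW0]; simp
    linarith
  have := mul_le_mul_of_nonneg_left hfinal (by linarith : 0 ≤ 12 * h)
  linarith

theorem exists_asympVarLE_zero (H : BVApprox f F e) {x : ℝ} (hx : x ∉ contactSet f) :
    ∃ ρ > 0, AsympVarLE (maxDiff f F) (Icc (x - ρ) (x + ρ)) 0 := by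
  simp only [contactSet, mem_ofPred_eq, not_forall, not_exists, not_and, not_lt] at hx
  obtain ⟨δ, hδ, hA⟩ := hx
  have hcont := H.bv.continuous_uMax H.dom
  obtain ⟨η, hη, hc⟩ := Metric.continuous_iff.1 hcont x (δ / 4) (by linarith)
  simp only [Real.dist_eq] at hc
  obtain ⟨M, hM0, hM⟩ := H.bv.exists_bound
  set ρ := min (δ / 8) (η / 4)
  have hρ0 : 0 < ρ := lt_min (by linarith) (by linarith)
  have hρ1 : ρ ≤ δ / 8 := min_le_left _ _
  have hρ2 : ρ ≤ η / 4 := min_le_right _ _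
  refine ⟨ρ, hρ0, fun ε hε => ?_⟩
  set B := (2 * (eVariationOn f univ).toReal + 1) / (δ / 4) + (M + 1) * (4 * ρ) / (δ / 4) ^ 2
  let G : ℝ → ℝ := fun h => (uMax f (x + 2 * ρ) - uMax f (x + 2 * ρ - 2 * h))
        - (uMax f (x - 2 * ρ + 2 * h) - uMax f (x - 2 * ρ)) + 12 * h * B
  have hG : Continuous G := by fun_prop
  have hG0 : G 0 = 0 := by simp [G]
  have hlim : Tendsto (fun N : ℕ => 4 * ρ / ((N : ℝ) + 2)) atTop (𝓝 0) :=
    tendsto_const_nhds.div_atTop (tendsto_atTop_add_const_right _ _ tendsto_natCast_atTop_atTop)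
  have hGl : Tendsto (fun N : ℕ => G (4 * ρ / ((N : ℝ) + 2))) atTop (𝓝 0) := by
    rw [← hG0]; exact (hG.tendsto 0).comp hlim
  obtain ⟨N, hN2, hN⟩ := ((eventually_ge_atTop 2).and
    (hGl.eventually_lt_const (by linarith : (0 : ℝ) < ε / 2))).exists
  have hNpos : (0 : ℝ) < N := by exact_mod_cast (by lia : 0 < N)
  filter_upwards [H.eventually_le (by linarith : 0 < δ / 8), H.eventually_le one_pos,
    H.eventually_le (by positivity : 0 < ε / (4 * N))] with j h1 h2 h3
  refine (H.eVariationOn_maxDiff_le_of_gap hδ hρ0 (by linarith) hM0 hM hA (fun y hy => ?_) h1 h2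
    rfl hN2).trans ?_
  · linarith [(abs_lt.1 (hc y (by linarith))).1]
  · rw [zero_add]
    apply ENNReal.ofReal_le_ofReal
    rw [le_div_iff₀ (by positivity)] at h3
    simp only [G, B] at hN
    linarith

theorem asympVarLE_Icc_zero (H : BVApprox f F e) {a b : ℝ}
    (h : ∀ x ∈ Icc a b, x ∉ contactSet f) : AsympVarLE (maxDiff f F) (Icc a b) 0 := by
  rcases lt_or_ge b a with hba | hab
  · rw [Icc_eq_empty (not_le.2 hba)]
    exact .of_eventually (.of_forall fun j => by simp)
  set S := {t | t ∈ Icc a b ∧ AsympVarLE (maxDiff f F) (Icc a t) 0}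
  have ha : a ∈ S := ⟨left_mem_Icc.2 hab, .of_eventually (.of_forall fun j => by
    rw [Icc_self]; exact (eVariationOn.subsingleton _ subsingleton_singleton).le)⟩
  have hbdd : BddAbove S := ⟨b, fun t ht => ht.1.2⟩
  set c := sSup S
  have hac : a ≤ c := le_csSup hbdd ha
  have hcb : c ≤ b := csSup_le ⟨a, ha⟩ fun t ht => ht.1.2
  obtain ⟨ρ, hρ, hc⟩ := H.exists_asympVarLE_zero (h c ⟨hac, hcb⟩)
  obtain ⟨t, ht, htc⟩ := exists_lt_of_lt_csSup ⟨a, ha⟩ (by linarith : c - ρ < c)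
  have htc' : t ≤ c := le_csSup hbdd ht
  set d := min b (c + ρ)
  have hcd : c ≤ d := le_min hcb (by linarith)
  have hd : d ∈ S := by
    refine ⟨⟨hac.trans hcd, min_le_left _ _⟩, ?_⟩
    have := ht.2.Icc_union ht.1.1 (htc'.trans hcd)
      (hc.mono (Icc_subset_Icc htc.le (min_le_right _ _)) le_rfl)
    simpa using this
  have hdc : d ≤ c := le_csSup hbdd hd
  have : d = b := by
    by_contra hne
    have : d = c + ρ := by
      rcases min_choice b (c + ρ) with h | h
      · exact absurd h hne
      · exact h
    linarith
  exact this ▸ hd.2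

end BVApprox

/-! ### Local control by the variation of the limit -/

theorem BVfun.uMax_sub_abs_le_of_mem_contactSet {f : ℝ → ℝ} (hf : BVfun f) {a b p : ℝ}
    (hp : p ∈ contactSet f) (hap : a < p) (hpb : p < b) :
    uMax f p - |f p| ≤ (eVariationOn f (Icc a b)).toReal := by
  have hfin : eVariationOn f (Icc a b) ≠ ⊤ :=
    ne_top_of_le_ne_top hf (eVariationOn.mono _ (subset_univ _))
  refine le_of_forall_pos_lt_add fun ε hε => ?_
  obtain ⟨t, ht, hft⟩ := hp (min ε (min (p - a) (b - p)))
    (lt_min hε (lt_min (by linarith) (by linarith)))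
  have h1 : min ε (min (p - a) (b - p)) ≤ ε := min_le_left _ _
  have h2 : min ε (min (p - a) (b - p)) ≤ p - a := (min_le_right _ _).trans (min_le_left _ _)
  have h3 : min ε (min (p - a) (b - p)) ≤ b - p := (min_le_right _ _).trans (min_le_right _ _)
  rw [abs_lt] at ht
  have h4 := abs_sub_le_of_eVariationOn_le (u := f) ENNReal.toReal_nonneg
    (ENNReal.ofReal_toReal hfin).ge (x := t) (y := p) ⟨by linarith, by linarith⟩
    ⟨by linarith, by linarith⟩
  linarith [abs_sub_abs_le_abs_sub (f t) (f p)]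

namespace BVApprox

variable {f : ℝ → ℝ} {F : ℕ → ℝ → ℝ} {e : ℕ → ℝ}

theorem asympVarLE_Icc_zero_left (H : BVApprox f F e) {a p : ℝ}
    (h : ∀ x, a ≤ x → x < p → x ∉ contactSet f) : AsympVarLE (maxDiff f F) (Icc a p) 0 := by
  refine .of_forall_pos fun ε hε => ?_
  obtain ⟨η, hη, hp⟩ := H.exists_asympVarLE_nhds p hε
  rcases le_total a (p - η) with h1 | h1
  · exact (H.asympVarLE_Icc_zero fun x hx => h x hx.1 (by linarith [hx.2])).Icc_union h1
      (by linarith) (hp.mono (Icc_subset_Icc le_rfl (by linarith)) le_rfl)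
  · rw [zero_add]
    exact hp.mono (Icc_subset_Icc h1 (by linarith)) le_rfl

theorem asympVarLE_Icc_zero_right (H : BVApprox f F e) {q b : ℝ}
    (h : ∀ x, q < x → x ≤ b → x ∉ contactSet f) : AsympVarLE (maxDiff f F) (Icc q b) 0 := by
  refine .of_forall_pos fun ε hε => ?_
  obtain ⟨η, hη, hq⟩ := H.exists_asympVarLE_nhds q hε
  rw [zero_add]
  rcases le_total (q + η) b with h1 | h1
  · have := (hq.mono (Icc_subset_Icc (by linarith : q - η ≤ q) le_rfl) le_rfl).Icc_union
      (by linarith) h1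
      (H.asympVarLE_Icc_zero fun x hx => h x (by linarith [hx.1]) hx.2)
    rwa [add_zero] at this
  · exact hq.mono (Icc_subset_Icc (by linarith) h1) le_rfl

theorem asympVarLE_Icc_of_mem_contactSet (H : BVApprox f F e) {a b p q : ℝ}
    (hap : a < p) (hpq : p ≤ q) (hqb : q < b) (hp : p ∈ contactSet f) (hq : q ∈ contactSet f) :
    AsympVarLE (maxDiff f F) (Icc p q) (8 * eVariationOn f (Icc a b)) := by
  intro ε hε
  filter_upwards [H.eventually_le (by linarith : 0 < ε / 6)] with j hj
  have hfin : eVariationOn f (Icc a b) ≠ ⊤ :=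
    ne_top_of_le_ne_top H.bv (eVariationOn.mono _ (subset_univ _))
  have hgp := H.bv.uMax_sub_abs_le_of_mem_contactSet hp hap (hpq.trans_lt hqb)
  have hgq := H.bv.uMax_sub_abs_le_of_mem_contactSet hq (hap.trans_le hpq) hqb
  have hgj : ∀ x, uMax (F j) x - |F j x| ≤ uMax f x - |f x| + 2 * e j := fun x => by
    have h1 := (abs_le.1 (H.close_uMax j x)).2
    have h2 := H.close j x
    have h3 := abs_sub_abs_le_abs_sub (f x) (F j x)
    rw [abs_sub_comm] at h3
    linarith
  set T := eVariationOn f (Icc a b)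
  have hT : ENNReal.ofReal T.toReal = T := ENNReal.ofReal_toReal hfin
  have he := H.e_nonneg j
  have hsub : Icc p q ⊆ Icc a b := Icc_subset_Icc hap.le hqb.le
  have A : eVariationOn (uMax f) (Icc p q) ≤ 2 * T + T + T := by
    refine (H.bv.eVariationOn_uMax_le hpq (h := fun x => |f x|) (fun _ _ => le_rfl)
      (fun x _ => H.dom x)).trans (add_le_add (add_le_add ?_ ?_) ?_)
    · gcongr
      exact (eVariationOn_abs_le _ _).trans (eVariationOn.mono _ hsub)
    · rw [← hT]; exact ENNReal.ofReal_le_ofReal hgp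
    · rw [← hT]; exact ENNReal.ofReal_le_ofReal hgq
  have B : eVariationOn (uMax (F j)) (Icc p q) ≤ 2 * (T + ENNReal.ofReal (e j)) +
      (T + 2 * ENNReal.ofReal (e j)) + (T + 2 * ENNReal.ofReal (e j)) := by
    have hbd : ∀ r, uMax f r - |f r| ≤ T.toReal → ENNReal.ofReal (uMax (F j) r - |F j r|) ≤
        T + 2 * ENNReal.ofReal (e j) := fun r hr => by
      rw [← hT, ← ENNReal.ofReal_ofNat, ← ENNReal.ofReal_mul (by norm_num),
        ← ENNReal.ofReal_add ENNReal.toReal_nonneg (by linarith)]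
      exact ENNReal.ofReal_le_ofReal (by linarith [hgj r])
    refine ((H.bvj j).eVariationOn_uMax_le hpq (h := fun x => |F j x|) (fun _ _ => le_rfl)
      (fun x _ => H.domj j x)).trans (add_le_add (add_le_add ?_ (hbd p hgp)) (hbd q hgq))
    gcongr
    exact (eVariationOn_abs_le _ _).trans ((eVariationOn.mono _ hsub).trans (H.var_le j _))
  calc _ ≤ _ := eVariationOn_sub_le _ _ _
    _ ≤ _ := add_le_add B A
    _ = 8 * T + 6 * ENNReal.ofReal (e j) := by ring
    _ ≤ 8 * T + 6 * ENNReal.ofReal (ε / 6) := by gcongr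
    _ = _ := by
      rw [← ENNReal.ofReal_ofNat 6, ← ENNReal.ofReal_mul (by norm_num)]
      congr 2; ring

/-- Asymptotically, the variation of the difference of maximal functions is controlled by the
variation of the limit function on a larger interval. -/
theorem asympVarLE_Icc (H : BVApprox f F e) {a' a b b' : ℝ} (ha : a' < a) (hb : b < b') :
    AsympVarLE (maxDiff f F) (Icc a b) (8 * eVariationOn f (Icc a' b')) := by
  have hcl := isClosed_contactSet (H.bv.continuous_uMax H.dom)
  have hcpt : IsCompact (contactSet f ∩ Icc a b) := isCompact_Icc.inter_left hcl
  rcases (contactSet f ∩ Icc a b).eq_empty_or_nonempty with h0 | hne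
  · exact (H.asympVarLE_Icc_zero fun x hx hxc =>
      notMem_empty x (h0 ▸ ⟨hxc, hx⟩)).mono subset_rfl zero_le
  obtain ⟨p, hp, hpm⟩ := hcpt.exists_isLeast hne
  obtain ⟨q, hq, hqm⟩ := hcpt.exists_isGreatest hne
  have hpq : p ≤ q := hpm hq
  have h1 := H.asympVarLE_Icc_zero_left (a := a) (p := p) fun x hx hxp hxc =>
    absurd (hpm ⟨hxc, hx, hxp.le.trans hp.2.2⟩) (not_le.2 hxp)
  have h2 := H.asympVarLE_Icc_zero_right (q := q) (b := b) fun x hx hxb hxc =>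
    absurd (hqm ⟨hxc, hq.2.1.trans hx.le, hxb⟩) (not_le.2 hx)
  have h3 := H.asympVarLE_Icc_of_mem_contactSet (ha.trans_le hp.2.1) hpq (hq.2.2.trans_lt hb)
    hp.1 hq.1
  have := (h1.Icc_union hp.2.1 hpq h3).Icc_union (hp.2.1.trans hpq) hq.2.2 h2
  rwa [zero_add, add_zero] at this

end BVApprox

/-! ### The image of the contact set under the variation function -/

/-- `V` is a primitive of the variation of `f`. -/
def IsCumulativeVariation (f V : ℝ → ℝ) : Prop :=
  Monotone V ∧ ∀ x y, x ≤ y → eVariationOn f (Icc x y) = ENNReal.ofReal (V y - V x)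

theorem BVfun.exists_isCumulativeVariation {f : ℝ → ℝ} (hf : BVfun f) :
    ∃ V, IsCumulativeVariation f V := by
  refine ⟨variationOnFromTo f univ 0, ?_, fun x y hxy => ?_⟩
  · exact monotoneOn_univ.1 (variationOnFromTo.monotoneOn hf.locally (mem_univ 0))
  · rw [variationOnFromTo.sub_right hf.locally (mem_univ _) (mem_univ _) (mem_univ _),
      variationOnFromTo.eq_of_le _ _ hxy, univ_inter, ENNReal.ofReal_toReal]
    exact ne_top_of_le_ne_top hf (eVariationOn.mono _ (subset_univ _))

theorem IsCumulativeVariation.abs_sub_le {f V : ℝ → ℝ} (h : IsCumulativeVariation f V) (x y : ℝ) :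
    |f x - f y| ≤ |V x - V y| := by
  wlog hxy : x ≤ y generalizing x y
  · rw [abs_sub_comm, abs_sub_comm (V x)]
    exact this y x (le_of_not_ge hxy)
  have h0 := sub_nonneg.2 (h.1 hxy)
  rw [abs_sub_comm (V x), abs_of_nonneg h0]
  exact abs_sub_le_of_eVariationOn_le h0 (h.2 x y hxy).le (left_mem_Icc.2 hxy) (right_mem_Icc.2 hxy)

theorem IsCumulativeVariation.exists_lipschitz {f V : ℝ → ℝ} (h : IsCumulativeVariation f V) :
    ∃ φ : ℝ → ℝ, LipschitzWith 1 φ ∧ f = φ ∘ V := by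
  have hl : LipschitzOnWith 1 (fun s => f (Function.invFun V s)) (range V) := by
    refine LipschitzOnWith.of_dist_le_mul fun s hs t ht => ?_
    have := h.abs_sub_le (Function.invFun V s) (Function.invFun V t)
    rw [Function.invFun_eq hs, Function.invFun_eq ht] at this
    simpa [Real.dist_eq] using this
  obtain ⟨φ, hφ, he⟩ := hl.extend_real
  refine ⟨φ, hφ, funext fun x => ?_⟩
  have h1 : f (Function.invFun V (V x)) = φ (V x) := he (mem_range_self x)
  have h2 := h.abs_sub_le x (Function.invFun V (V x))
  have h0 : V (Function.invFun V (V x)) = V x := Function.invFun_eq ⟨x, rfl⟩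
  rw [h0, sub_self, abs_zero] at h2
  have h3 : f x = f (Function.invFun V (V x)) := by
    linarith [abs_le.1 h2]
  rw [h3, h1, Function.comp]

theorem LipschitzWith.ae_abs_deriv_eq_one {φ : ℝ → ℝ} (hφ : LipschitzWith 1 φ) {p q : ℝ}
    (hpq : p ≤ q) (hvar : ENNReal.ofReal (q - p) ≤ eVariationOn φ (Icc p q)) :
    ∀ᵐ s, s ∈ Icc p q → |deriv φ s| = 1 := by
  have hac : ∀ x y, AbsolutelyContinuousOnInterval φ x y := fun x y =>
    (hφ.lipschitzOnWith (s := uIcc x y)).absolutelyContinuousOnInterval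
  have hinteg : ∀ x y, IntervalIntegrable (deriv φ) volume x y := fun x y =>
    (hac x y).intervalIntegrable_deriv
  have hle : ∀ s, |deriv φ s| ≤ 1 := fun s => by
    simpa using norm_deriv_le_of_lipschitz hφ (x₀ := s)
  have h1 := eVariationOn_le_of_majorant (u := φ) (B := fun y => ∫ s in p..y, |deriv φ s|) hpq
    fun x y _ hxy _ => by
      rw [intervalIntegral.integral_interval_sub_left (hinteg _ _).abs (hinteg _ _).abs,
        ← (hac x y).integral_deriv_eq_sub]
      exact intervalIntegral.abs_integral_le_integral_abs hxy
  have h2 := hvar.trans h1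
  simp only [intervalIntegral.integral_same, sub_zero] at h2
  rw [ENNReal.ofReal_le_ofReal_iff (intervalIntegral.integral_nonneg hpq fun _ _ => abs_nonneg _)]
    at h2
  have h3 : ∫ s in Icc p q, (1 - |deriv φ s|) = 0 := by
    rw [integral_Icc_eq_integral_Ioc, ← intervalIntegral.integral_of_le hpq]
    refine le_antisymm ?_ (intervalIntegral.integral_nonneg hpq fun s _ => by linarith [hle s])
    rw [intervalIntegral.integral_sub intervalIntegrable_const (hinteg _ _).abs]
    simpa using h2
  have hi : IntegrableOn (fun s => 1 - |deriv φ s|) (Icc p q) := by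
    rw [integrableOn_Icc_iff_integrableOn_Ioc, ← intervalIntegrable_iff_integrableOn_Ioc_of_le hpq]
    exact intervalIntegrable_const.sub (hinteg _ _).abs
  rw [setIntegral_eq_zero_iff_of_nonneg_ae
    (Eventually.of_forall fun s => by simpa using hle s) hi] at h3
  rw [EventuallyEq, ae_restrict_iff' measurableSet_Icc] at h3
  filter_upwards [h3] with s hs hmem
  have := hs hmem
  simp only [Pi.zero_apply] at this
  linarith

theorem IsCumulativeVariation.ae_abs_deriv_eq_one {f V φ : ℝ → ℝ} (h : IsCumulativeVariation f V)
    (hφ : LipschitzWith 1 φ) (hf : f = φ ∘ V) : ∀ᵐ s, s ∈ range V → |deriv φ s| = 1 := by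
  have h1 : ∀ n : ℕ, ∀ᵐ s, s ∈ Icc (V (-n)) (V n) → |deriv φ s| = 1 := fun n => by
    have hn : -(n : ℝ) ≤ n := by linarith [(Nat.cast_nonneg n : (0 : ℝ) ≤ n)]
    refine hφ.ae_abs_deriv_eq_one (h.1 hn) ?_
    rw [← h.2 _ _ hn, hf]
    exact eVariationOn.comp_le_of_monotoneOn φ V (h.1.monotoneOn _) fun x hx =>
      ⟨h.1 hx.1, h.1 hx.2⟩
  filter_upwards [ae_all_iff.2 h1] with s hs
  rintro ⟨x, rfl⟩
  obtain ⟨n, hn⟩ := exists_nat_ge |x|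
  have := abs_le.1 hn
  exact hs n ⟨h.1 this.1, h.1 this.2⟩

theorem exists_sign_abs_growth {φ : ℝ → ℝ} {s₀ : ℝ} (hd : DifferentiableAt ℝ φ s₀)
    (h1 : |deriv φ s₀| = 1) : ∃ η > 0, ∃ σ : ℝ, (σ = 1 ∨ σ = -1) ∧
      ∀ s, |s - s₀| < η → 0 ≤ σ * (s - s₀) → |φ s₀| + |s - s₀| / 2 ≤ |φ s| := by
  have hd' := hasDerivAt_iff_isLittleO.1 hd.hasDerivAt
  have h2 := hd'.def (by norm_num : (0 : ℝ) < 1 / 2)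
  obtain ⟨η, hη, h3⟩ := Metric.eventually_nhds_iff.1 h2
  simp only [Real.dist_eq, smul_eq_mul, Real.norm_eq_abs] at h3
  obtain ⟨τ, hτ, hτφ⟩ : ∃ τ : ℝ, (τ = 1 ∨ τ = -1) ∧ |φ s₀| = τ * φ s₀ := by
    rcases le_total 0 (φ s₀) with h | h
    · exact ⟨1, Or.inl rfl, by rw [abs_of_nonneg h, one_mul]⟩
    · exact ⟨-1, Or.inr rfl, by rw [abs_of_nonpos h]; ring⟩
  have hc : deriv φ s₀ = 1 ∨ deriv φ s₀ = -1 := eq_or_eq_neg_of_abs_eq h1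
  refine ⟨η, hη, τ * deriv φ s₀, ?_, fun s hs hσ => ?_⟩
  · rcases hτ with rfl | rfl <;> rcases hc with h | h <;> simp [h]
  have h4 := abs_le.1 (h3 hs)
  have h5 : |s - s₀| = τ * deriv φ s₀ * (s - s₀) := by
    rw [← abs_of_nonneg hσ, abs_mul, abs_mul, h1]
    rcases hτ with rfl | rfl <;> simp
  have h6 : τ * φ s ≤ |φ s| := by
    rcases hτ with rfl | rfl
    · simpa using le_abs_self (φ s)
    · simpa using neg_le_abs (φ s)
  refine le_trans ?_ h6
  rcases hτ with rfl | rfl <;> linarith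

theorem BVfun.exists_constancy_of_contact {f V φ : ℝ → ℝ} (hf : BVfun f)
    (hV : IsCumulativeVariation f V) (hφ : f = φ ∘ V) {x : ℝ} (hx : x ∈ contactSet f)
    (hc : ContinuousAt V x) (hd : DifferentiableAt ℝ φ (V x)) (h1 : |deriv φ (V x)| = 1) :
    ∃ y z, y < z ∧ V y = V x ∧ V z = V x := by
  have hgx : uMax f x ≤ |f x| := by
    refine le_of_forall_pos_lt_add fun ε hε => ?_
    obtain ⟨δ, hδ, h⟩ := Metric.continuousAt_iff.1 hc (ε / 2) (by linarith)
    simp only [Real.dist_eq] at h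
    obtain ⟨t, ht, hft⟩ := hx (min δ (ε / 2)) (lt_min hδ (by linarith))
    have h2 := h (lt_of_lt_of_le ht (min_le_left _ _))
    have h3 := hV.abs_sub_le t x
    linarith [min_le_right δ (ε / 2), abs_sub_abs_le_abs_sub (f t) (f x)]
  obtain ⟨η, hη, σ, hσ, hgrow⟩ := exists_sign_abs_growth hd h1
  obtain ⟨δ, hδ, hVδ⟩ := Metric.continuousAt_iff.1 hc η hη
  simp only [Real.dist_eq] at hVδ
  have hfφ : ∀ r, f r = φ (V r) := fun r => by rw [hφ]; rfl
  rcases hσ with rfl | rfl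
  · set m := x + δ / 4 with hm
    set t := x + δ / 2 with ht
    refine ⟨x, m, by linarith, rfl, le_antisymm ?_ (hV.1 (by linarith))⟩
    have hb : ∀ r, x ≤ r → r ≤ t → |f x| + (V r - V x) / 2 ≤ |f r| := fun r h2 h3 => by
      have h4 := sub_nonneg.2 (hV.1 h2)
      have h5 := hgrow (V r) (hVδ (by rw [abs_of_nonneg] <;> linarith)) (by linarith)
      rwa [abs_of_nonneg h4, ← hfφ, ← hfφ] at h5
    have i1 := hf.le_integral (a := x) (b := m) (K := |f x|) (by linarith) fun r hr => by
      linarith [hb r hr.1.le (by linarith [hr.2]), hV.1 hr.1.le]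
    have i2 := hf.le_integral (a := m) (b := t) (K := |f x| + (V m - V x) / 2) (by linarith)
      fun r hr => by
        linarith [hb r (by linarith [hr.1]) hr.2.le, hV.1 hr.1.le]
    have i3 := hf.integral_add x m t
    have i4 := hf.integral_le_uMax (a := x) (b := t) (x := x) (by linarith) le_rfl (by linarith)
    have e1 : m - x = δ / 4 := by ring
    have e2 : t - m = δ / 4 := by ring
    have e3 : t - x = δ / 2 := by ring
    rw [e1] at i1; rw [e2] at i2; rw [e3] at i4
    have i5 := mul_le_mul_of_nonneg_right hgx (by linarith : 0 ≤ δ / 2)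
    nlinarith
  · set m := x - δ / 4 with hm
    set t := x - δ / 2 with ht
    refine ⟨m, x, by linarith, le_antisymm (hV.1 (by linarith)) ?_, rfl⟩
    have hb : ∀ r, r ≤ x → t ≤ r → |f x| + (V x - V r) / 2 ≤ |f r| := fun r h2 h3 => by
      have h4 := sub_nonpos.2 (hV.1 h2)
      have h5 := hgrow (V r) (hVδ (by rw [abs_of_nonpos] <;> linarith)) (by linarith)
      rw [abs_of_nonpos h4, ← hfφ, ← hfφ] at h5
      linarith
    have i1 := hf.le_integral (a := m) (b := x) (K := |f x|) (by linarith) fun r hr => by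
      linarith [hb r hr.2.le (by linarith [hr.1]), hV.1 hr.2.le]
    have i2 := hf.le_integral (a := t) (b := m) (K := |f x| + (V x - V m) / 2) (by linarith)
      fun r hr => by
        linarith [hb r (by linarith [hr.2]) hr.1.le, hV.1 hr.2.le]
    have i3 := hf.integral_add t m x
    have i4 := hf.integral_le_uMax (a := t) (b := x) (x := x) (by linarith) (by linarith) le_rfl
    have e1 : x - m = δ / 4 := by ring
    have e2 : m - t = δ / 4 := by ring
    have e3 : x - t = δ / 2 := by ring
    rw [e1] at i1; rw [e2] at i2; rw [e3] at i4
    have i5 := mul_le_mul_of_nonneg_right hgx (by linarith : 0 ≤ δ / 2)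
    nlinarith

theorem BVfun.volume_image_contactSet {f V : ℝ → ℝ} (hf : BVfun f)
    (hV : IsCumulativeVariation f V) :
    volume (V '' (contactSet f ∩ {x | ContinuousAt V x})) = 0 := by
  obtain ⟨φ, hφ, hfφ⟩ := hV.exists_lipschitz
  have h1 := hV.ae_abs_deriv_eq_one hφ hfφ
  have h2 := hφ.ae_differentiableAt_real
  have h3 := (hV.1.countable_setOfPred_two_preimages).ae_notMem (volume : Measure ℝ)
  refine measure_mono_null ?_ (ae_iff.1 (h1.and (h2.and h3)))
  rintro _ ⟨x, ⟨hx, hc⟩, rfl⟩ ⟨k1, k2, k3⟩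
  exact k3 (hf.exists_constancy_of_contact hV hfφ hx hc k2 (k1 (mem_range_self x)))

/-! ### Assembling the local estimates -/

theorem sum_ofReal_sub_le_volume {v : ℕ → ℝ} (hv : Monotone v) {O : Set ℝ} (S : Finset ℕ)
    (h : ∀ k ∈ S, Icc (v k) (v (k + 1)) ⊆ O) :
    ∑ k ∈ S, ENNReal.ofReal (v (k + 1) - v k) ≤ volume O := by
  have hd : (S : Set ℕ).PairwiseDisjoint fun k => Ioc (v k) (v (k + 1)) := fun i _ j _ hij =>
    hv.pairwise_disjoint_on_Ioc_succ hij
  calc ∑ k ∈ S, ENNReal.ofReal (v (k + 1) - v k)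
      = ∑ k ∈ S, volume (Ioc (v k) (v (k + 1))) := by simp only [Real.volume_Ioc]
    _ = volume (⋃ k ∈ S, Ioc (v k) (v (k + 1))) :=
        (measure_biUnion_finset hd fun _ _ => measurableSet_Ioc).symm
    _ ≤ volume O := measure_mono (iUnion₂_subset fun k hk => Ioc_subset_Icc_self.trans (h k hk))

theorem sum_indicator_le {s : Set ℝ} {w : ℝ → ℝ} (hw : ∀ i, 0 < w i) {ε : ℝ}
    (h : ∀ t : Finset ℝ, ↑t ⊆ s → ∑ i ∈ t, w i ≤ ε) (t : Finset ℝ) :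
    ∑ i ∈ t, s.indicator (fun x => ENNReal.ofReal (w x)) i ≤ ENNReal.ofReal ε := by
  classical
  rw [Finset.sum_indicator_eq_sum_filter,
    ← ENNReal.ofReal_sum_of_nonneg fun i _ => (hw i).le]
  exact ENNReal.ofReal_le_ofReal (h _ fun x hx => (Finset.mem_filter.1 hx).2)

namespace BVApprox

variable {f V : ℝ → ℝ} {F : ℕ → ℝ → ℝ} {e : ℕ → ℝ}

theorem exists_local_cover (H : BVApprox f F e) {O : Set ℝ} (hO : IsOpen O)
    (hsub : V '' (contactSet f ∩ {x | ContinuousAt V x}) ⊆ O) {w : ℝ → ℝ} (hw : ∀ x, 0 < w x)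
    (x : ℝ) : ∃ η > 0, AsympVarLE (maxDiff f F) (Ioo (x - η) (x + η))
        ({x | ¬ ContinuousAt V x}.indicator (fun x => ENNReal.ofReal (w x)) x) ∨
      ∀ y ∈ Ioo (x - η) (x + η), ∀ z ∈ Ioo (x - η) (x + η), Icc (V y) (V z) ⊆ O := by
  by_cases hc : ContinuousAt V x
  · by_cases hx : x ∈ contactSet f
    · obtain ⟨δ, hδ, hball⟩ := Metric.isOpen_iff.1 hO (V x) (hsub ⟨x, ⟨hx, hc⟩, rfl⟩)
      obtain ⟨η, hη, hVη⟩ := Metric.continuousAt_iff.1 hc δ hδ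
      have hV : ∀ y ∈ Ioo (x - η) (x + η), |V y - V x| < δ := fun y hy =>
        hVη (by rw [Real.dist_eq, abs_lt]; constructor <;> linarith [hy.1, hy.2])
      refine ⟨η, hη, Or.inr fun y hy z hz r hr => hball ?_⟩
      have h1 := abs_lt.1 (hV y hy)
      have h2 := abs_lt.1 (hV z hz)
      rw [Metric.mem_ball, Real.dist_eq, abs_lt]
      constructor <;> linarith [hr.1, hr.2]
    · obtain ⟨ρ, hρ, h⟩ := H.exists_asympVarLE_zero hx
      exact ⟨ρ, hρ, Or.inl (h.mono Ioo_subset_Icc_self zero_le)⟩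
  · obtain ⟨η, hη, h⟩ := H.exists_asympVarLE_nhds x (hw x)
    refine ⟨η, hη, Or.inl (h.mono Ioo_subset_Icc_self ?_)⟩
    rw [indicator_of_mem (show x ∈ {x | ¬ ContinuousAt V x} from hc)]

/-- Estimate on a fine grid whose cells either lie in one of the sets `U i`, on which the variation
is asymptotically small, or are mapped by `V` into an open set of small measure. -/
theorem eventually_eVariationOn_grid_le (H : BVApprox f F e) (hV : IsCumulativeVariation f V)
    {O : Set ℝ} {U : ℝ → Set ℝ} {W : ℝ → ℝ≥0∞} {ε a d : ℝ} (hε : 0 < ε) (hd : 0 < d) {n : ℕ}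
    (hn : 0 < n) (ι : ℕ → ℝ) (A : Set ℝ)
    (hU : ∀ k < n, Icc (a + k * d - d) (a + k * d + 2 * d) ⊆ U (ι k))
    (hA : ∀ i ∈ A, AsympVarLE (maxDiff f F) (U i) (W i))
    (hB : ∀ i ∉ A, ∀ y ∈ U i, ∀ z ∈ U i, Icc (V y) (V z) ⊆ O)
    (hW : ∀ t : Finset ℝ, ∑ i ∈ t, W i ≤ ENNReal.ofReal ε) (hOε : volume O ≤ ENNReal.ofReal ε) :
    ∀ᶠ j in atTop, eVariationOn (maxDiff f F j) (Icc a (a + n * d)) ≤ ENNReal.ofReal (27 * ε) := by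
  classical
  set t : ℕ → ℝ := fun k => a + k * d with ht
  have htm : Monotone t := fun i j hij => by
    have : (i : ℝ) ≤ j := by exact_mod_cast hij
    simp only [ht]; nlinarith
  have hts : ∀ k, t (k + 1) = t k + d := fun k => by simp only [ht]; push_cast; ring
  have hn0 : (0 : ℝ) < n := by exact_mod_cast hn
  have hεn : 0 < ε / n := by positivity
  set SA := (Finset.range n).filter (fun k => ι k ∈ A) with hSA
  set SB := (Finset.range n).filter (fun k => ι k ∉ A) with hSB
  have e1 : ∀ᶠ j in atTop, ∀ i ∈ SA.image ι,
      eVariationOn (maxDiff f F j) (U i) ≤ W i + ENNReal.ofReal (ε / n) := by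
    rw [eventually_all_finset]
    intro i hi
    obtain ⟨k, hk, rfl⟩ := Finset.mem_image.1 hi
    exact hA _ (Finset.mem_filter.1 hk).2 _ hεn
  have e2 : ∀ᶠ j in atTop, ∀ k ∈ SB, eVariationOn (maxDiff f F j) (Icc (t k) (t (k + 1))) ≤
      8 * eVariationOn f (Icc (t k - d) (t k + 2 * d)) + ENNReal.ofReal (ε / n) := by
    rw [eventually_all_finset]
    intro k _
    exact H.asympVarLE_Icc (by linarith) (by rw [hts]; linarith) _ hεn
  filter_upwards [e1, e2] with j h1 h2
  have hnε : ∀ S : Finset ℕ, S.card ≤ n →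
      (S.card : ℝ≥0∞) * ENNReal.ofReal (ε / n) ≤ ENNReal.ofReal ε := fun S hS => by
    rw [← ENNReal.ofReal_natCast, ← ENNReal.ofReal_mul (Nat.cast_nonneg _)]
    apply ENNReal.ofReal_le_ofReal
    have : (S.card : ℝ) ≤ n := by exact_mod_cast hS
    rw [mul_div_assoc', div_le_iff₀ hn0]
    nlinarith
  have hcard : ∀ p : ℕ → Prop, [DecidablePred p] → ((Finset.range n).filter p).card ≤ n :=
    fun p _ => (Finset.card_filter_le _ _).trans (Finset.card_range n).le
  have hsumA : ∑ k ∈ SA, eVariationOn (maxDiff f F j) (Icc (t k) (t (k + 1))) ≤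
      ENNReal.ofReal ε + ENNReal.ofReal ε := by
    rw [← Finset.sum_fiberwise_of_maps_to (t := SA.image ι) (g := ι)
      fun k hk => Finset.mem_image_of_mem ι hk]
    calc _ ≤ ∑ i ∈ SA.image ι, (W i + ENNReal.ofReal (ε / n)) := by
          refine Finset.sum_le_sum fun i hi => (sum_eVariationOn_le htm _ (U i) ?_).trans (h1 i hi)
          intro k hk
          obtain ⟨hkA, rfl⟩ := Finset.mem_filter.1 hk
          have hkn : k < n := Finset.mem_range.1 (Finset.mem_filter.1 hkA).1
          refine Subset.trans (Icc_subset_Icc ?_ ?_) (hU k hkn)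
          · simp only [ht]; linarith
          · rw [hts]; simp only [ht]; linarith
      _ ≤ ENNReal.ofReal ε + (SA.card : ℝ≥0∞) * ENNReal.ofReal (ε / n) := by
          rw [Finset.sum_add_distrib, Finset.sum_const, nsmul_eq_mul]
          gcongr
          · exact hW _
          · exact Finset.card_image_le
      _ ≤ _ := by gcongr; exact hnε _ (hcard _)
  have hmem : ∀ k ∈ SB, ∀ r s : ℝ, -1 ≤ r → r ≤ 2 → -1 ≤ s → s ≤ 2 →
      Icc (V (t k + r * d)) (V (t k + s * d)) ⊆ O := fun k hk r s hr hr' hs hs' => by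
    obtain ⟨hk, hkA⟩ := Finset.mem_filter.1 hk
    have hk := hU k (Finset.mem_range.1 hk)
    refine hB _ hkA _ (hk ⟨?_, ?_⟩) _ (hk ⟨?_, ?_⟩) <;> simp only [ht] <;> nlinarith
  have hmono : ∀ r : ℝ, Monotone fun k => V (t k + r * d) := fun r i j hij =>
    hV.1 (by linarith [htm hij])
  have hsum3 : ∀ r : ℝ, -1 ≤ r → r ≤ 1 →
      ∑ k ∈ SB, ENNReal.ofReal (V (t k + (r + 1) * d) - V (t k + r * d)) ≤ ENNReal.ofReal ε := by
    intro r hr hr'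
    have heq : ∀ k, t (k + 1) + r * d = t k + (r + 1) * d := fun k => by rw [hts]; ring
    have := sum_ofReal_sub_le_volume (hmono r) (O := O) SB fun k hk => by
      rw [heq]; exact hmem k hk _ _ hr (by linarith) (by linarith) (by linarith)
    simp only [heq] at this
    exact this.trans hOε
  have hsumB : ∑ k ∈ SB, eVariationOn (maxDiff f F j) (Icc (t k) (t (k + 1))) ≤
      8 * (ENNReal.ofReal ε + ENNReal.ofReal ε + ENNReal.ofReal ε) + ENNReal.ofReal ε := by
    refine (Finset.sum_le_sum h2).trans ?_
    rw [Finset.sum_add_distrib, Finset.sum_const, nsmul_eq_mul, ← Finset.mul_sum]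
    refine add_le_add (mul_le_mul_right ?_ _) (hnε _ (hcard _))
    calc _ = ∑ k ∈ SB, (ENNReal.ofReal (V (t k + (-1 + 1) * d) - V (t k + (-1) * d)) +
            ENNReal.ofReal (V (t k + (0 + 1) * d) - V (t k + 0 * d)) +
            ENNReal.ofReal (V (t k + (1 + 1) * d) - V (t k + 1 * d))) := by
          refine Finset.sum_congr rfl fun k _ => ?_
          have m1 : V (t k + (-1) * d) ≤ V (t k + (-1 + 1) * d) := hV.1 (by linarith)
          have m2 : V (t k + 0 * d) ≤ V (t k + (0 + 1) * d) := hV.1 (by linarith)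
          have m3 : V (t k + 1 * d) ≤ V (t k + (1 + 1) * d) := hV.1 (by linarith)
          rw [hV.2 _ _ (by linarith), ← ENNReal.ofReal_add (by linarith) (by linarith),
            ← ENNReal.ofReal_add (by linarith) (by linarith)]
          congr 1
          have e1 : t k - d = t k + (-1) * d := by ring
          have e2 : t k + 2 * d = t k + (1 + 1) * d := by ring
          have e3 : t k + (-1 + 1) * d = t k + 0 * d := by ring
          have e4 : t k + (0 + 1) * d = t k + 1 * d := by ring
          rw [e1, e2, e3, e4]; ring
      _ ≤ _ := by
          rw [Finset.sum_add_distrib, Finset.sum_add_distrib]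
          exact add_le_add (add_le_add (hsum3 _ (by norm_num) (by norm_num))
            (hsum3 _ (by norm_num) (by norm_num))) (hsum3 _ (by norm_num) (by norm_num))
  have hsplit := eVariationOn.sum' (maxDiff f F j) htm (n := n)
  rw [← Finset.sum_filter_add_sum_filter_not (Finset.range n) (fun k => ι k ∈ A)] at hsplit
  have ht0 : t 0 = a := by simp [ht]
  rw [ht0] at hsplit
  rw [← hsplit]
  refine (add_le_add hsumA hsumB).trans (le_of_eq ?_)
  rw [ENNReal.ofReal_mul (by norm_num), ENNReal.ofReal_ofNat]
  ring

theorem asympVarLE_Icc_zero_of_le (H : BVApprox f F e) {a b : ℝ} (hab : a < b) :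
    AsympVarLE (maxDiff f F) (Icc a b) 0 := by
  refine .of_forall_pos fun ε₀ hε₀ => ?_
  rw [zero_add]
  set ε := ε₀ / 27 with hε
  have hε0 : 0 < ε := by positivity
  obtain ⟨V, hV⟩ := H.bv.exists_isCumulativeVariation
  obtain ⟨w, hw, hws⟩ := hV.1.countable_not_continuousAt.exists_pos_forall_sum_le hε0
  obtain ⟨O, hsub, hO, hOε⟩ := (V '' (contactSet f ∩ {x | ContinuousAt V x})).exists_isOpen_le_add
    volume (ε := ENNReal.ofReal ε) (ENNReal.ofReal_pos.2 hε0).ne'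
  rw [H.bv.volume_image_contactSet hV, zero_add] at hOε
  choose η hη hcov using H.exists_local_cover hO hsub hw
  obtain ⟨δ, hδ, hleb⟩ := lebesgue_number_lemma_of_metric (isCompact_Icc (a := a) (b := b))
    (c := fun x => Ioo (x - η x) (x + η x)) (fun _ => isOpen_Ioo)
    (fun x _ => mem_iUnion.2 ⟨x, by linarith [hη x], by linarith [hη x]⟩)
  obtain ⟨n, hn⟩ := exists_nat_gt (4 * (b - a) / δ)
  have hn0 : (0 : ℝ) < n := lt_of_le_of_lt (by
    have := sub_nonneg.2 hab.le
    positivity) hn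
  set d := (b - a) / n with hd
  have hd0 : 0 < d := div_pos (sub_pos.2 hab) hn0
  have hnd : n * d = b - a := by rw [hd]; field_simp
  have hdδ : 4 * d < δ := by
    rw [div_lt_iff₀ hδ] at hn
    by_contra! hcon
    nlinarith
  have hι : ∀ k : ℕ, ∃ i, k < n → Metric.ball (a + k * d) δ ⊆ Ioo (i - η i) (i + η i) := fun k => by
    by_cases hk : k < n
    · have hk' : (k : ℝ) ≤ n := by exact_mod_cast hk.le
      have hk0 : (0 : ℝ) ≤ k := Nat.cast_nonneg k
      obtain ⟨i, hi⟩ := hleb (a + k * d) ⟨by nlinarith, by nlinarith⟩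
      exact ⟨i, fun _ => hi⟩
    · exact ⟨0, fun h => absurd h hk⟩
  choose ι hι using hι
  have key := H.eventually_eVariationOn_grid_le hV (O := O) (U := fun x => Ioo (x - η x) (x + η x))
    (W := {x | ¬ ContinuousAt V x}.indicator fun x => ENNReal.ofReal (w x)) hε0 hd0 (a := a)
    (by exact_mod_cast hn0) ι
    {i | AsympVarLE (maxDiff f F) (Ioo (i - η i) (i + η i))
      ({x | ¬ ContinuousAt V x}.indicator (fun x => ENNReal.ofReal (w x)) i)}
    (fun k hk => Subset.trans (fun r hr => by
      rw [Metric.mem_ball, Real.dist_eq, abs_lt]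
      constructor <;> linarith [hr.1, hr.2]) (hι k hk))
    (fun i hi => hi) (fun i hi => (hcov i).resolve_left hi) (sum_indicator_le hw hws) hOε
  rw [hnd, add_sub_cancel] at key
  refine .of_eventually (key.mono fun j hj => hj.trans (le_of_eq ?_))
  rw [hε]; congr 1; ring

theorem asympVarLE_univ (H : BVApprox f F e) : AsympVarLE (maxDiff f F) univ 0 := by
  refine .of_forall_pos fun ε hε => ?_
  obtain ⟨R, hR, hl, hr⟩ := H.exists_asympVarLE_tails (ε := ε / 2) (by linarith)
  have hm := H.asympVarLE_Icc_zero_of_le (by linarith : -R < R)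
  have h1 : AsympVarLE (maxDiff f F) (Iic R) (ENNReal.ofReal (ε / 2) + 0) :=
    hl.of_le_add hm fun j => by
      rw [← eVariationOn.union _ isGreatest_Iic (isLeast_Icc (by linarith)),
        Iic_union_Icc_eq_Iic (by linarith)]
  have h2 : AsympVarLE (maxDiff f F) univ (ENNReal.ofReal (ε / 2) + 0 + ENNReal.ofReal (ε / 2)) :=
    h1.of_le_add hr fun j => by
      rw [← eVariationOn.union _ isGreatest_Iic isLeast_Ici, Iic_union_Ici]
  refine h2.mono subset_rfl (le_of_eq ?_)
  rw [add_zero, zero_add, ← ENNReal.ofReal_add (by linarith) (by linarith), add_halves]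

end BVApprox

/-! ### Right-continuous representatives -/

theorem BVfun.sub {f g : ℝ → ℝ} (hf : BVfun f) (hg : BVfun g) : BVfun (f - g) :=
  ((eVariationOn_sub_le f g univ).trans_lt
    (ENNReal.add_lt_top.2 ⟨Ne.lt_top hf, Ne.lt_top hg⟩)).ne

theorem BVfun.rightLim_ae_eq {f : ℝ → ℝ} (hf : BVfun f) : f =ᵐ[volume] f.rightLim := by
  obtain ⟨V, hV⟩ := hf.exists_isCumulativeVariation
  filter_upwards [hV.1.countable_not_continuousAt.ae_notMem volume] with x hx
  rw [not_not] at hx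
  have hc : ContinuousAt f x := by
    rw [Metric.continuousAt_iff] at hx ⊢
    intro ε hε
    obtain ⟨δ, hδ, h⟩ := hx ε hε
    refine ⟨δ, hδ, fun y hy => (?_ : dist (f y) (f x) ≤ dist (V y) (V x)).trans_lt (h hy)⟩
    exact hV.abs_sub_le ..
  exact hc.continuousWithinAt.rightLim_eq.symm

theorem BVfun.abs_rightLim_le_uMax {f : ℝ → ℝ} (hf : BVfun f) (x : ℝ) :
    |f.rightLim x| ≤ uMax f.rightLim x := by
  have hr : BVfun f.rightLim := BoundedVariationOn.rightLim hf
  refine le_of_forall_pos_le_add fun ε hε => ?_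
  have hc := (BoundedVariationOn.continuousWithinAt_rightLim hf (x := x)).abs
  obtain ⟨δ, hδ, h⟩ := Metric.continuousWithinAt_iff.1 hc ε hε
  have h1 := hr.le_integral (a := x) (b := x + δ) (K := |f.rightLim x| - ε) (by linarith)
    fun t ht => by
      have h2 := h (mem_Ici.2 ht.1.le) (by
        rw [Real.dist_eq, abs_of_pos (by linarith [ht.1])]; linarith [ht.2])
      rw [Real.dist_eq, abs_lt] at h2
      linarith [h2.1]
  have h2 := hr.integral_le_uMax (a := x) (b := x + δ) (x := x) (by linarith) le_rfl (by linarith)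
  have h3 : |f.rightLim x| - ε ≤ uMax f.rightLim x :=
    le_of_mul_le_mul_right (h1.trans h2) (by linarith)
  linarith

theorem BVfun.rightLim_sub {f g : ℝ → ℝ} (hf : BVfun f) (hg : BVfun g) :
    (f - g).rightLim = f.rightLim - g.rightLim :=
  funext fun x => rightLim_eq_of_tendsto
    ((BoundedVariationOn.tendsto_rightLim hf x).sub (BoundedVariationOn.tendsto_rightLim hg x))

theorem BVfun.abs_le_bvNorm {f : ℝ → ℝ} (hf : BVfun f) (x : ℝ) : |f x| ≤ bvNorm f := by
  have ht := BoundedVariationOn.tendsto_atBot_limUnder hf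
  have h : |f x - limUnder atBot f| ≤ varOn f univ :=
    le_of_tendsto (tendsto_const_nhds.sub ht).abs (Eventually.of_forall fun y => by
      have := BoundedVariationOn.dist_le hf (mem_univ x) (mem_univ y)
      rwa [Real.dist_eq] at this)
  calc |f x| = |limUnder atBot f + (f x - limUnder atBot f)| := by rw [add_sub_cancel]
    _ ≤ |limUnder atBot f| + |f x - limUnder atBot f| := abs_add_le _ _
    _ ≤ bvNorm f := by unfold bvNorm; gcongr

theorem BVfun.abs_rightLim_le_bvNorm {f : ℝ → ℝ} (hf : BVfun f) (x : ℝ) :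
    |f.rightLim x| ≤ bvNorm f :=
  le_of_tendsto (BoundedVariationOn.tendsto_rightLim hf x).abs
    (Eventually.of_forall fun y => hf.abs_le_bvNorm y)

theorem BVfun.eVariationOn_rightLim_le_bvNorm {f : ℝ → ℝ} (hf : BVfun f) :
    eVariationOn f.rightLim univ ≤ ENNReal.ofReal (bvNorm f) := by
  refine (eVariationOn.eVariationOn_rightLim_le isOpen_univ).trans ?_
  rw [← ENNReal.ofReal_toReal (a := eVariationOn f univ) hf]
  exact ENNReal.ofReal_le_ofReal (le_add_of_nonneg_left (abs_nonneg _))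

/-- Convergence in the `BV` norm passes to the right-continuous representatives. -/
theorem bvApprox_rightLim {f : ℝ → ℝ} (hf : BVfun f) {F : ℕ → ℝ → ℝ} (hF : ∀ j, BVfun (F j))
    (hconv : Tendsto (fun j => bvNorm (F j - f)) atTop (𝓝 0)) :
    BVApprox f.rightLim (fun j => (F j).rightLim) fun j => bvNorm (F j - f) where
  bv := BoundedVariationOn.rightLim hf
  bvj j := BoundedVariationOn.rightLim (hF j)
  dom := hf.abs_rightLim_le_uMax
  domj j := (hF j).abs_rightLim_le_uMax
  tendsto := hconv
  close j x := by
    have h := ((hF j).sub hf).abs_rightLim_le_bvNorm x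
    rwa [(hF j).rightLim_sub hf] at h
  var j := by
    have h := ((hF j).sub hf).eVariationOn_rightLim_le_bvNorm
    rwa [(hF j).rightLim_sub hf] at h

theorem BVApprox.tendsto_bvNorm_maxDiff {f : ℝ → ℝ} {F : ℕ → ℝ → ℝ} {e : ℕ → ℝ}
    (H : BVApprox f F e) : Tendsto (fun j => bvNorm (maxDiff f F j)) atTop (𝓝 0) := by
  have hnonneg : ∀ j, 0 ≤ bvNorm (maxDiff f F j) := fun j =>
    add_nonneg (abs_nonneg _) ENNReal.toReal_nonneg
  have hbv : ∀ j, BVfun (maxDiff f F j) := fun j =>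
    ((H.bvj j).uMax_bv (H.domj j)).sub (H.bv.uMax_bv H.dom)
  rw [Metric.tendsto_atTop']
  intro ε hε
  obtain ⟨N, hN⟩ := eventually_atTop.1 ((H.asympVarLE_univ (ε / 2) (half_pos hε)).and
    (H.tendsto.eventually_lt_const (half_pos hε)))
  refine ⟨N, fun j hj => ?_⟩
  obtain ⟨hvar, he⟩ := hN j hj.le
  rw [zero_add] at hvar
  have h1 : |limUnder atBot (maxDiff f F j)| ≤ e j :=
    le_of_tendsto (BoundedVariationOn.tendsto_atBot_limUnder (hbv j)).abs
      (Eventually.of_forall fun x => H.close_uMax j x)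
  have h2 : varOn (maxDiff f F j) univ ≤ ε / 2 :=
    ENNReal.toReal_le_of_le_ofReal (half_pos hε).le hvar
  rw [Real.dist_eq, sub_zero, abs_of_nonneg (hnonneg j)]
  unfold bvNorm
  linarith

theorem stmt18 (f : ℝ → ℝ) (hf : BVfun f) (fj : ℕ → ℝ → ℝ) (hfj : ∀ j, BVfun (fj j))
    (hconv : Tendsto (fun j => bvNorm (fj j - f)) atTop (𝓝 0)) :
    Tendsto (fun j => bvNorm (uMax (fj j) - uMax f)) atTop (𝓝 0) := by
  have h := (bvApprox_rightLim hf hfj hconv).tendsto_bvNorm_maxDiff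
  simpa only [maxDiff, ← uMax_congr_ae hf.rightLim_ae_eq,
    ← uMax_congr_ae (hfj _).rightLim_ae_eq] using h
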